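/- Let S be a smooth cubic surface in P^3 over a field K and let ℓ be a K-line contained in S. Then every point P ∈ ℓ(K) is either parabolic or K-hyperbolic. Moreover: (i) if char(K) ≠ 2 then the Gauss map γ_ℓ on ℓ is separable, exactly two points of ℓ(K̄) are parabolic, and ℓ contains at most two Eckardt points; (ii) if char(K) = 2 and γ_ℓ is separable then exactly one point of ℓ(K̄) is parabolic and ℓ contains at most one Eckardt point; (iii) if char(K) = 2 and γ_ℓ is inseparable then every point of ℓ(K̄) is parabolic and ℓ contains exactly 5 Eckardt points. -/

import Mathlib

/- Common framework: points, lines, intersection divisors, the secant-tangent span,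
the groups `H_S(K)`, geometric notions over the algebraic closure, and topologies. -/

open MvPolynomial

noncomputable section

namespace CubicSurf

variable {K L : Type*} [Field K] [Field L] {n : ℕ}

/-- The set of `K`-rational points of the projective hypersurface `F = 0`. -/
def zeroSet (F : MvPolynomial (Fin n) K) : Set (Projectivization K (Fin n → K)) :=
  {P | eval P.rep F = 0}

/-- The binary form obtained by restricting `F` to the line spanned by `u` and `v`,
via the parametrization `(s : t) ↦ s • u + t • v`. -/
def lineRestrict (F : MvPolynomial (Fin n) K) (u v : Fin n → K) : MvPolynomial (Fin 2) K :=
  aeval (fun i => C (u i) * X 0 + C (v i) * X 1) F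

/-- A projective line: a 2-dimensional linear subspace of `K^n`. -/
def IsLine (W : Submodule K (Fin n → K)) : Prop := Module.finrank K W = 2

/-- The line `W` lies (geometrically) on the hypersurface `F = 0`. -/
def LineOnSurf (F : MvPolynomial (Fin n) K) (W : Submodule K (Fin n → K)) : Prop :=
  ∀ u v : Fin n → K, u ∈ W → v ∈ W → lineRestrict F u v = 0

/-- The projective point `P` lies on the line `W`. -/
def OnLine (W : Submodule K (Fin n → K)) (P : Projectivization K (Fin n → K)) : Prop :=
  P.rep ∈ W

/-- The set of `K`-points of the line `W`. -/
def linePts (W : Submodule K (Fin n → K)) : Set (Projectivization K (Fin n → K)) :=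
  {P | OnLine W P}

/-- `ℓ · S = P + Q + R`: the intersection divisor (with multiplicities) of the line `W`
with the hypersurface `F = 0` is `P + Q + R`. -/
def MeetsIn (F : MvPolynomial (Fin n) K) (W : Submodule K (Fin n → K))
    (P Q R : Projectivization K (Fin n → K)) : Prop :=
  ∃ (u v : Fin n → K) (_ : u ∈ W) (_ : v ∈ W) (_ : LinearIndependent K ![u, v])
    (c : K) (l m : Fin 3 → K) (h : ∀ k, l k • u + m k • v ≠ 0),
      c ≠ 0 ∧
      lineRestrict F u v = C c * ∏ k : Fin 3, (C (m k) * X 0 - C (l k) * X 1) ∧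
      Projectivization.mk K _ (h 0) = P ∧
      Projectivization.mk K _ (h 1) = Q ∧
      Projectivization.mk K _ (h 2) = R

/-- Membership in the span of a set of points under the secant/tangent process:
the smallest subset of `S(K)` containing `B` such that whenever `P`, `Q` are in it and a
`K`-line `ℓ ⊄ S` satisfies `ℓ·S = P+Q+R` with `R ∈ S(K)`, then `R` is in it. -/
inductive SpanMem (F : MvPolynomial (Fin n) K) (B : Set (Projectivization K (Fin n → K))) :
    Projectivization K (Fin n → K) → Prop
  | base (P : Projectivization K (Fin n → K)) (hP : P ∈ B) : SpanMem F B P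
  | secant (P Q R : Projectivization K (Fin n → K)) (W : Submodule K (Fin n → K))
      (hW : IsLine W) (hWS : ¬ LineOnSurf F W) (hP : SpanMem F B P) (hQ : SpanMem F B Q)
      (hR : R ∈ zeroSet F) (hm : MeetsIn F W P Q R) : SpanMem F B R

/-- The span of a set of points under the secant/tangent process. -/
def Span (F : MvPolynomial (Fin n) K) (B : Set (Projectivization K (Fin n → K))) :
    Set (Projectivization K (Fin n → K)) :=
  {P | SpanMem F B P}

/-- Smoothness of the projective hypersurface `F = 0`: over the algebraic closure there is
no nonzero common zero of `F` and all of its partial derivatives. -/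
def IsSmoothHypersurf (F : MvPolynomial (Fin n) K) : Prop :=
  ∀ v : Fin n → AlgebraicClosure K,
    eval v (MvPolynomial.map (algebraMap K (AlgebraicClosure K)) F) = 0 →
    (∀ i, eval v (pderiv i (MvPolynomial.map (algebraMap K (AlgebraicClosure K)) F)) = 0) →
    v = 0

/-- A smooth cubic hypersurface. -/
def SmoothCubic (F : MvPolynomial (Fin n) K) : Prop :=
  F.IsHomogeneous 3 ∧ IsSmoothHypersurf F

/-- The linear form cutting out the tangent plane `Π_P` of `F = 0` at `P`,
evaluated at the representative of a point `Q`; `Q ∈ Π_P` iff this vanishes. -/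
def tangentEval (F : MvPolynomial (Fin n) K) (P Q : Projectivization K (Fin n → K)) : K :=
  ∑ i, eval P.rep (pderiv i F) * Q.rep i

/-- The set of `K`-points of the tangent plane `Π_P`. -/
def tangentPlanePts (F : MvPolynomial (Fin n) K) (P : Projectivization K (Fin n → K)) :
    Set (Projectivization K (Fin n → K)) :=
  {Q | tangentEval F P Q = 0}

/-- The set of `K`-points of `Γ_P = S ∩ Π_P`. -/
def GammaPts (F : MvPolynomial (Fin n) K) (P : Projectivization K (Fin n → K)) :
    Set (Projectivization K (Fin n → K)) :=
  zeroSet F ∩ tangentPlanePts F P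

/-! ### Base change along a field embedding -/

/-- Base change of a vector along a field embedding. -/
def clVec (φ : K →+* L) (v : Fin n → K) : Fin n → L := fun i => φ (v i)

lemma clVec_ne_zero (φ : K →+* L) {v : Fin n → K} (hv : v ≠ 0) : clVec φ v ≠ 0 := by
  intro h
  apply hv
  funext i
  have := congrFun h i
  simpa [clVec] using φ.injective (by simpa [clVec] using this)

/-- Base change of a projective point along a field embedding. -/
def clPt (φ : K →+* L) (P : Projectivization K (Fin n → K)) :
    Projectivization L (Fin n → L) :=
  Projectivization.mk L (clVec φ P.rep) (clVec_ne_zero φ P.rep_nonzero)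

lemma eval_smul_of_isHomogeneous {R : Type*} [CommSemiring R] {F : MvPolynomial (Fin n) R}
    {d : ℕ} (hF : F.IsHomogeneous d) (a : R) (w : Fin n → R) :
    eval (a • w) F = a ^ d * eval w F := by
  classical
  rw [eval_eq', eval_eq', Finset.mul_sum]
  refine Finset.sum_congr rfl fun s hs => ?_
  have hdeg : ∑ i, s i = d := by
    have h1 := hF (MvPolynomial.mem_support_iff.mp hs)
    rw [Finsupp.weight_apply] at h1
    rw [← h1, Finsupp.sum_fintype]
    · simp
    · intro i; simp
  have key : ∀ i : Fin n, (a • w) i ^ s i = a ^ s i * w i ^ s i := by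
    intro i; simp [mul_pow]
  rw [Finset.prod_congr rfl (fun i _ => key i), Finset.prod_mul_distrib,
    Finset.prod_pow_eq_pow_sum, hdeg]
  ring

lemma clVec_eval (φ : K →+* L) (F : MvPolynomial (Fin n) K) (v : Fin n → K) :
    eval (clVec φ v) (MvPolynomial.map φ F) = φ (eval v F) := by
  rw [eval_map]
  have h : φ (eval v F) = φ (eval₂Hom (RingHom.id K) v F) := rfl
  rw [h, map_eval₂Hom]
  rfl

/-- A point given by a vector on which a homogeneous `F` vanishes lies in the zero set. -/
lemma mk_mem_zeroSet {F : MvPolynomial (Fin n) K} {d : ℕ} (hF : F.IsHomogeneous d)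
    {v : Fin n → K} (hv : v ≠ 0) (h : eval v F = 0) :
    Projectivization.mk K v hv ∈ zeroSet F := by
  obtain ⟨a, ha⟩ := Projectivization.exists_smul_eq_mk_rep K v hv
  show eval (Projectivization.mk K v hv).rep F = 0
  have hrep : (Projectivization.mk K v hv).rep = (a : K) • v := by
    rw [← ha, Units.smul_def]
  rw [hrep, eval_smul_of_isHomogeneous hF, h, mul_zero]

lemma clPt_mem_zeroSet (φ : K →+* L) {F : MvPolynomial (Fin n) K} {d : ℕ}
    (hF : F.IsHomogeneous d) {P : Projectivization K (Fin n → K)} (hP : P ∈ zeroSet F) :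
    clPt φ P ∈ zeroSet (MvPolynomial.map φ F) := by
  apply mk_mem_zeroSet (hF.map φ)
  rw [clVec_eval, hP, map_zero]

/-- The induced map on points of `S` under base change of the field. -/
def ptMap (φ : K →+* L) {F : MvPolynomial (Fin n) K} {d : ℕ} (hF : F.IsHomogeneous d)
    (P : zeroSet F) : zeroSet (MvPolynomial.map φ F) :=
  ⟨clPt φ P.1, clPt_mem_zeroSet φ hF P.2⟩

/-- A subspace of `L^n` is defined over `K` (w.r.t. `φ : K →+* L`) if it is spanned by
the base change of a `K`-subspace. -/
def DefinedOver (φ : K →+* L) (W : Submodule L (Fin n → L)) : Prop :=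
  ∃ W₀ : Submodule K (Fin n → K), W = Submodule.span L (clVec φ '' (W₀ : Set (Fin n → K)))

/-! ### Asymptotic lines, parabolic points, Eckardt points -/

/-- The line `W` is asymptotic to `F = 0` at `P`: the intersection multiplicity
`(ℓ · S)_P` is at least 3. -/
def AsymptoticAt (F : MvPolynomial (Fin n) K) (W : Submodule K (Fin n → K))
    (P : Projectivization K (Fin n → K)) : Prop :=
  IsLine W ∧ P.rep ∈ W ∧
    ∃ v ∈ W, LinearIndependent K ![P.rep, v] ∧
      ∃ c : K, lineRestrict F P.rep v = C c * (X 1) ^ 3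

/-- The set of asymptotic lines at `P`. -/
def AsymSet (F : MvPolynomial (Fin n) K) (P : Projectivization K (Fin n → K)) :
    Set (Submodule K (Fin n → K)) :=
  {W | AsymptoticAt F W P}

/-- A point of a hypersurface is parabolic (relative to the given field) if it does
not have exactly two distinct asymptotic lines (i.e. it has one or infinitely many). -/
def ParabolicAt (F : MvPolynomial (Fin n) K) (P : Projectivization K (Fin n → K)) : Prop :=
  ¬ ∃ W₁ W₂ : Submodule K (Fin n → K), W₁ ≠ W₂ ∧ AsymSet F P = {W₁, W₂}

/-- An Eckardt point (relative to the given field): three distinct lines lying on the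
surface pass through `P`. -/
def EckardtAt (F : MvPolynomial (Fin n) K) (P : Projectivization K (Fin n → K)) : Prop :=
  ∃ W₁ W₂ W₃ : Submodule K (Fin n → K), W₁ ≠ W₂ ∧ W₁ ≠ W₃ ∧ W₂ ≠ W₃ ∧
    (∀ W ∈ ({W₁, W₂, W₃} : Set (Submodule K (Fin n → K))),
      IsLine W ∧ LineOnSurf F W ∧ OnLine W P)

section geometric

variable (F : MvPolynomial (Fin n) K)

/-- `F` base changed to the algebraic closure of `K`. -/
def clF : MvPolynomial (Fin n) (AlgebraicClosure K) :=
  MvPolynomial.map (algebraMap K (AlgebraicClosure K)) F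

/-- A `K`-point of `S` is parabolic (a geometric notion, checked over `K̄`). -/
def IsParabolic (P : Projectivization K (Fin n → K)) : Prop :=
  ParabolicAt (clF F) (clPt (algebraMap K (AlgebraicClosure K)) P)

/-- A `K`-point of `S` is an Eckardt point (a geometric notion, checked over `K̄`). -/
def IsEckardt (P : Projectivization K (Fin n → K)) : Prop :=
  EckardtAt (clF F) (clPt (algebraMap K (AlgebraicClosure K)) P)

/-- A `K`-point of `S` is `K`-hyperbolic: it has exactly two asymptotic lines over `K̄`,
and both are defined over `K`. -/
def IsHyperbolic (P : Projectivization K (Fin n → K)) : Prop :=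
  ∃ W₁ W₂, W₁ ≠ W₂ ∧
    AsymSet (clF F) (clPt (algebraMap K (AlgebraicClosure K)) P) = {W₁, W₂} ∧
    DefinedOver (algebraMap K (AlgebraicClosure K)) W₁ ∧
    DefinedOver (algebraMap K (AlgebraicClosure K)) W₂

/-- A `K`-point of `S` is `K`-ternary: at least one of the asymptotic lines of `S`
through `P` is defined over `K`. -/
def IsTernary (P : Projectivization K (Fin n → K)) : Prop :=
  ∃ W ∈ AsymSet (clF F) (clPt (algebraMap K (AlgebraicClosure K)) P),
    DefinedOver (algebraMap K (AlgebraicClosure K)) W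

end geometric

/-! ### The group `H_S(K)` -/

variable (F : MvPolynomial (Fin n) K)

/-- `G_S(K)`: the free abelian group on the set `S(K)`. -/
abbrev GS := FreeAbelianGroup (zeroSet F)

/-- The degree homomorphism `G_S(K) → ℤ`, `Σ aᵢ Pᵢ ↦ Σ aᵢ`. -/
def degHom : GS F →+ ℤ := FreeAbelianGroup.lift fun _ => (1 : ℤ)

/-- `P + Q + R` is a "three point sum": either cut out on `S` with multiplicity by a
`K`-line not contained in `S`, or `P`, `Q`, `R` all lie on a `K`-line contained in `S`. -/
def TripleRel (P Q R : zeroSet F) : Prop :=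
  ∃ W : Submodule K (Fin n → K), IsLine W ∧
    ((¬ LineOnSurf F W ∧ MeetsIn F W P.1 Q.1 R.1) ∨
      (LineOnSurf F W ∧ OnLine W P.1 ∧ OnLine W Q.1 ∧ OnLine W R.1))

/-- `G'_S(K)`: the subgroup generated by all three point sums. -/
def Gp : AddSubgroup (GS F) :=
  AddSubgroup.closure {x | ∃ P Q R : zeroSet F, TripleRel F P Q R ∧
    x = FreeAbelianGroup.of P + FreeAbelianGroup.of Q + FreeAbelianGroup.of R}

/-- `G''_S(K)`: the degree-0 part of `G'_S(K)`. -/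
def Gpp : AddSubgroup (GS F) := Gp F ⊓ (degHom F).ker

/-- `H_S(K) = G_S(K)/G''_S(K)`. -/
abbrev HS := GS F ⧸ Gpp F

/-- The class `[P] ∈ H_S(K)` of a point `P ∈ S(K)`. -/
def HClass (P : zeroSet F) : HS F := QuotientAddGroup.mk' (Gpp F) (FreeAbelianGroup.of P)

/-- The degree homomorphism `H_S(K) → ℤ`. -/
def HdegHom : HS F →+ ℤ :=
  QuotientAddGroup.lift (Gpp F) (degHom F) (fun _ hx => hx.2)

/-- `H⁰_S(K)`: the degree-0 part of `H_S(K)`. -/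
def H0 : AddSubgroup (HS F) := (HdegHom F).ker

@[simp] lemma HdegHom_HClass (P : zeroSet F) : HdegHom F (HClass F P) = 1 := by
  simp [HdegHom, HClass, degHom]

/-- The class `[P] - [Q]`, as an element of `H⁰_S(K)`. -/
def H0diff (P Q : zeroSet F) : H0 F :=
  ⟨HClass F P - HClass F Q, by simp [H0, AddMonoidHom.mem_ker, map_sub]⟩

/-! ### mod-`p` dimensions and torsion -/

/-- `A/pA` for an abelian group `A`. -/
abbrev ModP (p : ℕ) (A : Type*) [AddCommGroup A] : Type _ :=
  A ⧸ (AddMonoidHom.range (nsmulAddMonoidHom p : A →+ A))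

instance ModP.instModule (p : ℕ) (A : Type*) [AddCommGroup A] : Module (ZMod p) (ModP p A) :=
  QuotientAddGroup.zmodModule (fun x => ⟨x, rfl⟩)

/-- `dim_{F_p} A/pA`. -/
def dimModP (p : ℕ) (A : Type*) [AddCommGroup A] : Cardinal := Module.rank (ZMod p) (ModP p A)

/-- The `k`-torsion subgroup `A[k]` of an abelian group `A`. -/
def torsion (k : ℕ) (A : Type*) [AddCommGroup A] : AddSubgroup A :=
  (nsmulAddMonoidHom k : A →+ A).ker

instance torsion.instModule (k : ℕ) (A : Type*) [AddCommGroup A] :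
    Module (ZMod k) (torsion k A) :=
  AddCommGroup.zmodModule (fun x => Subtype.ext x.2)

/-- `dim_{F_k} A[k]`: the dimension of the `k`-torsion subgroup (for `k` prime). -/
def dimTorsion (k : ℕ) (A : Type*) [AddCommGroup A] : Cardinal :=
  Module.rank (ZMod k) (torsion k A)

/-! ### Topologies -/

/-- The quotient topology on projective space induced by the topology of `K`. -/
def projTop (K : Type*) [Field K] [TopologicalSpace K] (n : ℕ) :
    TopologicalSpace (Projectivization K (Fin n → K)) :=
  TopologicalSpace.coinduced
    (fun v : {v : Fin n → K // v ≠ 0} => Projectivization.mk K v.1 v.2) inferInstance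

/-- The induced topology on the set of `K`-points of `S`. -/
def surfTop (F : MvPolynomial (Fin n) K) [TopologicalSpace K] :
    TopologicalSpace (zeroSet F) :=
  TopologicalSpace.induced Subtype.val (projTop K n)

/-- `K` (a topological field) is a local field: it is isomorphic, as a topological field,
to `ℝ`, to `ℂ`, or to a finite extension of `ℚ_p` for some prime `p` (with its canonical
topology, namely the `ℚ_p`-vector space topology). -/
def IsLocalField (K : Type*) [Field K] [TopologicalSpace K] : Prop :=
  (∃ e : K ≃+* ℝ, IsHomeomorph e) ∨ (∃ e : K ≃+* ℂ, IsHomeomorph e) ∨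
    (∃ (p : ℕ), p.Prime ∧ ∃ (_ : Fact p.Prime) (f : ℚ_[p] →+* K) (m : ℕ)
      (e : K ≃+ (Fin m → ℚ_[p])),
      (∀ (c : ℚ_[p]) (x : K), e (f c * x) = c • e x) ∧ IsHomeomorph e)

end CubicSurf

namespace CubicSurf

open MvPolynomial

variable {K : Type*} [Field K]

/-- The binary quadratic `q_a(s,t) = ∇F(s u + t v) · a` describing the Gauss map of
the line spanned by `u`, `v` in the direction `a`. -/
def gaussQuad (F : MvPolynomial (Fin 4) K) (u v a : Fin 4 → K) : MvPolynomial (Fin 2) K :=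
  ∑ i, C (a i) * lineRestrict (pderiv i F) u v

/-- The Gauss map `γ_ℓ : ℓ → ℙ¹` of a line `ℓ ⊆ S` (sending a point to its tangent plane
in the pencil of planes through `ℓ`) is separable: in coordinates, `γ_ℓ = (q_a : q_b)`
for binary quadratics `q_a`, `q_b`, and the map is separable iff the "Wronskian"
`q_a ∂q_b - q_b ∂q_a` is nonzero for one of the two partial derivatives. -/
def GaussSeparable (F : MvPolynomial (Fin 4) K) (W : Submodule K (Fin 4 → K)) : Prop :=
  ∃ u v a b : Fin 4 → K, u ∈ W ∧ v ∈ W ∧ LinearIndependent K ![u, v, a, b] ∧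
    (gaussQuad F u v a * pderiv 0 (gaussQuad F u v b) ≠
        gaussQuad F u v b * pderiv 0 (gaussQuad F u v a) ∨
      gaussQuad F u v a * pderiv 1 (gaussQuad F u v b) ≠
        gaussQuad F u v b * pderiv 1 (gaussQuad F u v a))

/-- The base change of a `K`-subspace of `K⁴` to the algebraic closure. -/
def clLine (W : Submodule K (Fin 4 → K)) :
    Submodule (AlgebraicClosure K) (Fin 4 → AlgebraicClosure K) :=
  Submodule.span (AlgebraicClosure K)
    (clVec (algebraMap K (AlgebraicClosure K)) '' (W : Set (Fin 4 → K)))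

end CubicSurf


namespace CubicSurf

open MvPolynomial

section part1

variable {L : Type*} [Field L]

/-- Coefficients of a cubic containing the line `y = z = 0`. -/
structure Coef (L : Type*) where
  (a0 a1 a2 b0 b1 b2 l1 m1 l2 m2 l3 m3 c0 c1 c2 c3 : L)

/-- Base change of coefficients. -/
def Coef.map {K L : Type*} [Field K] [Field L] (φ : K →+* L) (c : Coef K) : Coef L :=
  ⟨φ c.a0, φ c.a1, φ c.a2, φ c.b0, φ c.b1, φ c.b2, φ c.l1, φ c.m1, φ c.l2, φ c.m2, φ c.l3,
    φ c.m3, φ c.c0, φ c.c1, φ c.c2, φ c.c3⟩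

/-- The value of the cubic, in any commutative algebra, in coordinates `s t y z`. -/
def cval {R : Type*} [CommRing R] (f : L →+* R) (c : Coef L) (s t y z : R) : R :=
  y * (f c.a0 * s ^ 2 + f c.a1 * s * t + f c.a2 * t ^ 2)
  + z * (f c.b0 * s ^ 2 + f c.b1 * s * t + f c.b2 * t ^ 2)
  + y ^ 2 * (f c.l1 * s + f c.m1 * t) + y * z * (f c.l2 * s + f c.m2 * t)
  + z ^ 2 * (f c.l3 * s + f c.m3 * t)
  + (f c.c0 * y ^ 3 + f c.c1 * y ^ 2 * z + f c.c2 * y * z ^ 2 + f c.c3 * z ^ 3)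

/-- The explicit cubic polynomial. -/
def cpoly (c : Coef L) : MvPolynomial (Fin 4) L := cval C c (X 0) (X 1) (X 2) (X 3)

/-- Linear substitution. -/
def lsub (e : Fin 4 → Fin 4 → L) : Fin 4 → MvPolynomial (Fin 4) L :=
  fun i => ∑ j, C (e j i) * X j

/-- `G` in the coordinates given by `e` is the explicit cubic with coefficients `c`. -/
def Adapted (G : MvPolynomial (Fin 4) L) (e : Fin 4 → Fin 4 → L) (c : Coef L) : Prop :=
  aeval (lsub e) G = cpoly c

/-- Vectors in coordinates. -/
def vec (e : Fin 4 → Fin 4 → L) (s t y z : L) : Fin 4 → L :=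
  s • e 0 + t • e 1 + y • e 2 + z • e 3

lemma chain_rule (f : Fin 4 → MvPolynomial (Fin 4) L) (G : MvPolynomial (Fin 4) L) (j : Fin 4) :
    pderiv j (aeval f G) = ∑ i, aeval f (pderiv i G) * pderiv j (f i) := by
  induction G using MvPolynomial.induction_on with
  | C a => simp
  | add p q hp hq => simp only [map_add, hp, hq, add_mul, Finset.sum_add_distrib]
  | mul_X p k hp =>
    simp only [map_mul, aeval_X, Derivation.leibniz, hp, smul_eq_mul, map_add, add_mul,
      Finset.sum_add_distrib, Finset.mul_sum]
    congr 1
    · rw [Finset.sum_eq_single k]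
      · simp
      · intro b _ hb; simp [pderiv_X, Pi.single_apply, Ne.symm hb]
      · simp
    · apply Finset.sum_congr rfl; intros; ring

open scoped Pointwise in
lemma hom3_exists (G : MvPolynomial (Fin 4) L) (hG : G.IsHomogeneous 3) :
    ∃ c : Fin 4 → Fin 4 → Fin 4 → L, G = ∑ i, ∑ j, ∑ k, C (c i j k) * (X i * X j * X k) := by
  have h : G ∈ homogeneousSubmodule (Fin 4) L 3 := hG
  have : homogeneousSubmodule (Fin 4) L 3 =
      Submodule.span L (Set.range fun p : Fin 4 × Fin 4 × Fin 4 =>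
        (X p.1 * X p.2.1 * X p.2.2 : MvPolynomial (Fin 4) L)) := by
    have h3 : homogeneousSubmodule (Fin 4) L 3 = (homogeneousSubmodule (Fin 4) L 1) ^ 3 := by
      exact (homogeneousSubmodule_one_pow L 3).symm
    rw [h3, homogeneousSubmodule_one_eq_span_X, Submodule.span_pow]
    congr 1
    ext x
    have hp : ∀ S : Set (MvPolynomial (Fin 4) L), S ^ 3 = S * S * S := fun S => by
      rw [pow_succ, pow_succ, pow_one]
    rw [hp]
    simp only [Set.mem_mul, Set.mem_range, Prod.exists]
    constructor
    · rintro ⟨_, ⟨_, ⟨a, rfl⟩, _, ⟨b, rfl⟩, rfl⟩, _, ⟨d, rfl⟩, rfl⟩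
      exact ⟨a, b, d, rfl⟩
    · rintro ⟨a, b, d, rfl⟩
      exact ⟨_, ⟨_, ⟨a, rfl⟩, _, ⟨b, rfl⟩, rfl⟩, _, ⟨d, rfl⟩, rfl⟩
  rw [this, Submodule.mem_span_range_iff_exists_fun] at h
  obtain ⟨c, hc⟩ := h
  refine ⟨fun i j k => c (i, j, k), ?_⟩
  rw [← hc]
  simp only [Fintype.sum_prod_type, MvPolynomial.smul_eq_C_mul]

/-- binary cubic vanish -/
lemma bincubic_zero {p q r s : L}
    (h : (C p * X 0 ^ 3 + C q * X 0 ^ 2 * X 1 + C r * X 0 * X 1 ^ 2 + C s * X 1 ^ 3 :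
      MvPolynomial (Fin 2) L) = 0) : p = 0 ∧ q = 0 ∧ r = 0 ∧ s = 0 := by
  have h' := congrArg (aeval (fun i : Fin 2 => if i = 0 then (1 : Polynomial L) else Polynomial.X)) h
  simp [MvPolynomial.algHom_C, -map_eq_zero] at h'
  have e0 := congrArg (fun f => Polynomial.coeff f 0) h'
  have e1 := congrArg (fun f => Polynomial.coeff f 1) h'
  have e2 := congrArg (fun f => Polynomial.coeff f 2) h'
  have e3 := congrArg (fun f => Polynomial.coeff f 3) h'
  simp [Polynomial.coeff_X_pow, Polynomial.coeff_C, Polynomial.coeff_X] at e0 e1 e2 e3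
  exact ⟨e0, e1, e2, e3⟩

lemma binquad_zero {q r s : L}
    (h : (C q * X 0 ^ 2 + C r * X 0 * X 1 + C s * X 1 ^ 2 :
      MvPolynomial (Fin 2) L) = 0) : q = 0 ∧ r = 0 ∧ s = 0 := by
  have := bincubic_zero (p := 0) (q := q) (r := r) (s := s) (by
    linear_combination (X 1) * h + X 0 ^ 3 * (C_0 (R := L) (σ := Fin 2)))
  exact this.2

lemma aeval_lsub {R : Type*} [CommRing R] [Algebra L R] (e : Fin 4 → Fin 4 → L)
    (g : Fin 4 → R) (G : MvPolynomial (Fin 4) L) :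
    aeval g (aeval (lsub e) G) =
      aeval (fun i => ∑ j, algebraMap L R (e j i) * g j) G := by
  rw [← AlgHom.comp_apply, comp_aeval]
  congr 2
  funext i
  simp [lsub]

lemma lineRestrict_lsub (G : MvPolynomial (Fin 4) L) (e : Fin 4 → Fin 4 → L)
    (s t y z s' t' y' z' : L) :
    lineRestrict G (vec e s t y z) (vec e s' t' y' z') =
      aeval (![C s * X 0 + C s' * X 1, C t * X 0 + C t' * X 1, C y * X 0 + C y' * X 1,
        C z * X 0 + C z' * X 1] : Fin 4 → MvPolynomial (Fin 2) L) (aeval (lsub e) G) := by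
  rw [aeval_lsub, lineRestrict]
  congr 2
  funext i
  simp [vec, Fin.sum_univ_four, MvPolynomial.algebraMap_eq]
  ring

/-- first-order term `∇G(x) · x'` in coordinates. -/
def cB (c : Coef L) (s t y z s' t' y' z' : L) : L :=
  y' * (c.a0 * s ^ 2 + c.a1 * s * t + c.a2 * t ^ 2)
  + z' * (c.b0 * s ^ 2 + c.b1 * s * t + c.b2 * t ^ 2)
  + y * (2 * c.a0 * s * s' + c.a1 * (s * t' + s' * t) + 2 * c.a2 * t * t')
  + z * (2 * c.b0 * s * s' + c.b1 * (s * t' + s' * t) + 2 * c.b2 * t * t')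
  + 2 * y * y' * (c.l1 * s + c.m1 * t) + (y * z' + y' * z) * (c.l2 * s + c.m2 * t)
  + 2 * z * z' * (c.l3 * s + c.m3 * t)
  + y ^ 2 * (c.l1 * s' + c.m1 * t') + y * z * (c.l2 * s' + c.m2 * t')
  + z ^ 2 * (c.l3 * s' + c.m3 * t')
  + (3 * c.c0 * y ^ 2 * y' + c.c1 * (2 * y * y' * z + y ^ 2 * z') +
     c.c2 * (y' * z ^ 2 + 2 * y * z * z') + 3 * c.c3 * z ^ 2 * z')

lemma aeval_cpoly {R : Type*} [CommRing R] [Algebra L R] (c : Coef L) (g : Fin 4 → R) :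
    aeval g (cpoly c) = cval (algebraMap L R) c (g 0) (g 1) (g 2) (g 3) := by
  simp [cpoly, cval, MvPolynomial.algHom_C]

lemma Adapted.lineRestrict {G : MvPolynomial (Fin 4) L} {e : Fin 4 → Fin 4 → L} {c : Coef L}
    (h : Adapted G e c) (s t y z s' t' y' z' : L) :
    lineRestrict G (vec e s t y z) (vec e s' t' y' z') =
      C (cval (RingHom.id L) c s t y z) * X 0 ^ 3 + C (cB c s t y z s' t' y' z') * X 0 ^ 2 * X 1
      + C (cB c s' t' y' z' s t y z) * X 0 * X 1 ^ 2
      + C (cval (RingHom.id L) c s' t' y' z') * X 1 ^ 3 := by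
  rw [lineRestrict_lsub, h, aeval_cpoly]
  simp only [Matrix.cons_val, cval, cB, RingHom.id_apply, MvPolynomial.algebraMap_eq]
  simp only [map_add, map_mul, map_pow]
  have h2 : (C 2 : MvPolynomial (Fin 2) L) = 2 := map_ofNat C 2
  have h3 : (C 3 : MvPolynomial (Fin 2) L) = 3 := map_ofNat C 3
  rw [h2, h3]
  ring

lemma exists_adapted (G : MvPolynomial (Fin 4) L) (hG : G.IsHomogeneous 3)
    (e : Fin 4 → Fin 4 → L) (hl : CubicSurf.lineRestrict G (e 0) (e 1) = 0) :
    ∃ c : Coef L, Adapted G e c := by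
  have hH : (aeval (lsub e) G).IsHomogeneous 3 := by
    have := hG.aeval (lsub e) (n := 1) (fun i => by
      unfold lsub
      apply IsHomogeneous.sum
      intro j _
      simpa using (isHomogeneous_C_mul_X (e j i) j))
    simpa using this
  obtain ⟨d, hd⟩ := hom3_exists _ hH
  have h0 := lineRestrict_lsub G e 1 0 0 0 0 1 0 0
  have e0 : vec e 1 0 0 0 = e 0 := by simp [vec]
  have e1 : vec e 0 1 0 0 = e 1 := by simp [vec]
  rw [e0, e1, hl, hd] at h0
  have h1 := bincubic_zero (p := d 0 0 0) (q := d 0 0 1 + d 0 1 0 + d 1 0 0)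
    (r := d 0 1 1 + d 1 0 1 + d 1 1 0) (s := d 1 1 1) (by
      rw [h0]
      simp [Fin.sum_univ_four, MvPolynomial.algHom_C]
      ring)
  obtain ⟨h000, h001, h011, h111⟩ := h1
  replace h000 := congrArg (C (σ := Fin 4)) h000
  replace h001 := congrArg (C (σ := Fin 4)) h001
  replace h011 := congrArg (C (σ := Fin 4)) h011
  replace h111 := congrArg (C (σ := Fin 4)) h111
  simp only [map_add, map_zero] at h000 h001 h011 h111
  refine ⟨⟨d 0 0 2 + d 0 2 0 + d 2 0 0,
    d 0 1 2 + d 0 2 1 + d 1 0 2 + d 1 2 0 + d 2 0 1 + d 2 1 0,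
    d 1 1 2 + d 1 2 1 + d 2 1 1,
    d 0 0 3 + d 0 3 0 + d 3 0 0,
    d 0 1 3 + d 0 3 1 + d 1 0 3 + d 1 3 0 + d 3 0 1 + d 3 1 0,
    d 1 1 3 + d 1 3 1 + d 3 1 1,
    d 0 2 2 + d 2 0 2 + d 2 2 0, d 1 2 2 + d 2 1 2 + d 2 2 1,
    d 0 2 3 + d 0 3 2 + d 2 0 3 + d 2 3 0 + d 3 0 2 + d 3 2 0,
    d 1 2 3 + d 1 3 2 + d 2 1 3 + d 2 3 1 + d 3 1 2 + d 3 2 1,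
    d 0 3 3 + d 3 0 3 + d 3 3 0, d 1 3 3 + d 3 1 3 + d 3 3 1,
    d 2 2 2, d 2 2 3 + d 2 3 2 + d 3 2 2, d 2 3 3 + d 3 2 3 + d 3 3 2, d 3 3 3⟩, ?_⟩
  unfold Adapted
  rw [hd]
  simp only [cpoly, cval, Fin.sum_univ_four, map_add]
  linear_combination (X 0 ^ 3) * h000 + (X 0 ^ 2 * X 1) * h001 + (X 0 * X 1 ^ 2) * h011
    + X 1 ^ 3 * h111

lemma Adapted.map {K : Type*} [Field K] (φ : K →+* L) {G : MvPolynomial (Fin 4) K}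
    {e : Fin 4 → Fin 4 → K} {c : Coef K}
    (h : Adapted G e c) :
    Adapted (MvPolynomial.map φ G) (fun j => clVec φ (e j)) (c.map φ) := by
  have h' := congrArg (MvPolynomial.map φ) h
  unfold Adapted
  have : MvPolynomial.map φ (cpoly c) = cpoly (c.map φ) := by
    simp [cpoly, cval, Coef.map]
  rw [← this, ← h']
  rw [aeval_def, eval₂_map, aeval_def, ← coe_eval₂Hom, ← coe_eval₂Hom, map_eval₂Hom]
  congr 2
  · ext <;> simp
  · funext i
    simp [lsub, clVec]

lemma Adapted.pderiv_eval {G : MvPolynomial (Fin 4) L} {e : Fin 4 → Fin 4 → L} {c : Coef L}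
    (h : Adapted G e c) (s t y z : L) (j : Fin 4) :
    eval ![s, t, y, z] (pderiv j (cpoly c)) =
      ∑ i, eval (vec e s t y z) (pderiv i G) * e j i := by
  rw [← h, chain_rule, map_sum]
  apply Finset.sum_congr rfl
  intro i _
  rw [map_mul]
  congr 1
  · have := aeval_lsub e ![s, t, y, z] (pderiv i G)
    rw [aeval_eq_eval, aeval_eq_eval] at this
    change eval ![s, t, y, z] _ = eval _ _ at this
    rw [this]
    congr 2
    funext i
    simp [vec, Fin.sum_univ_four]; ring
  · simp [lsub, pderiv_C_mul, pderiv_X, Pi.single_apply]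

/-- A singular point in coordinates contradicts smoothness. -/
lemma Adapted.nonsing {G : MvPolynomial (Fin 4) L} {e : Fin 4 → Fin 4 → L} {c : Coef L}
    (h : Adapted G e c) (he : LinearIndependent L e)
    (hG : G.IsHomogeneous 3)
    (hsm : ∀ v, eval v G = 0 → (∀ i, eval v (pderiv i G) = 0) → v = 0)
    {s t y z : L} (h0 : cval (RingHom.id L) c s t y z = 0)
    (h1 : cB c s t y z 1 0 0 0 = 0) (h2 : cB c s t y z 0 1 0 0 = 0)
    (h3 : cB c s t y z 0 0 1 0 = 0) (h4 : cB c s t y z 0 0 0 1 = 0) :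
    s = 0 ∧ t = 0 ∧ y = 0 ∧ z = 0 := by
  have key : vec e s t y z = 0 := by
    apply hsm
    · have := aeval_lsub e ![s, t, y, z] G
      rw [h, aeval_cpoly] at this
      simp only [Matrix.cons_val] at this
      change cval (RingHom.id L) c s t y z = _ at this
      rw [h0, aeval_eq_eval] at this
      rw [this]
      change _ = eval _ _
      congr 2
      funext i
      simp [vec, Fin.sum_univ_four]; ring
    · have hz : ∀ j, ∑ i, eval (vec e s t y z) (pderiv i G) * e j i = 0 := by
        intro j
        rw [← h.pderiv_eval]
        fin_cases j
        · rw [← h1]; simp [cpoly, cval, cB, pderiv_X]; ring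
        · rw [← h2]; simp [cpoly, cval, cB, pderiv_X]; ring
        · rw [← h3]; simp [cpoly, cval, cB, pderiv_X]; ring
        · rw [← h4]; simp [cpoly, cval, cB, pderiv_X]; ring
      have hdet : IsUnit (Matrix.of e) := by
        rw [← Matrix.linearIndependent_rows_iff_isUnit]; exact he
      have hm : (Matrix.of e).mulVec (fun i => eval (vec e s t y z) (pderiv i G)) = 0 := by
        funext j
        rw [Pi.zero_apply, ← hz j]
        simp [Matrix.mulVec, dotProduct, mul_comm]
      have := Matrix.mulVec_injective_of_isUnit hdet (a₁ := fun i => eval (vec e s t y z) (pderiv i G)) (a₂ := 0) (by simpa using hm)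
      intro i
      exact congrFun this i
  have := Fintype.linearIndependent_iff.1 he ![s, t, y, z] (by
    rw [← key]; simp [vec, Fin.sum_univ_four])
  exact ⟨this 0, this 1, this 2, this 3⟩

lemma Adapted.gaussQuad_a {G : MvPolynomial (Fin 4) L} {e : Fin 4 → Fin 4 → L} {c : Coef L}
    (h : Adapted G e c) : gaussQuad G (e 0) (e 1) (e 2) =
      C c.a0 * X 0 ^ 2 + C c.a1 * X 0 * X 1 + C c.a2 * X 1 ^ 2 ∧
      gaussQuad G (e 0) (e 1) (e 3) =
      C c.b0 * X 0 ^ 2 + C c.b1 * X 0 * X 1 + C c.b2 * X 1 ^ 2 := by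
  have key : ∀ j, gaussQuad G (e 0) (e 1) (e j) =
      aeval (![X 0, X 1, 0, 0] : Fin 4 → MvPolynomial (Fin 2) L) (pderiv j (cpoly c)) := by
    intro j
    rw [← h, chain_rule, map_sum, gaussQuad]
    apply Finset.sum_congr rfl
    intro i _
    rw [map_mul, aeval_lsub, mul_comm]
    have h1 : CubicSurf.lineRestrict (pderiv i G) (e 0) (e 1) =
        aeval (fun i => ∑ j, algebraMap L (MvPolynomial (Fin 2) L) (e j i) *
          (![X 0, X 1, 0, 0] : Fin 4 → MvPolynomial (Fin 2) L) j) (pderiv i G) := by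
      unfold CubicSurf.lineRestrict
      congr 2
      funext i
      simp [Fin.sum_univ_four, MvPolynomial.algebraMap_eq]
    have h2 : pderiv j (lsub e i) = C (e j i) := by
      simp [lsub, pderiv_X, Pi.single_apply]
    rw [h1, h2, algHom_C]
    rfl
  have k2 : pderiv 2 (cpoly c) = C c.a0 * X 0 ^ 2 + C c.a1 * X 0 * X 1 + C c.a2 * X 1 ^ 2
      + X 2 * (2 * (C c.l1 * X 0 + C c.m1 * X 1)) + X 3 * (C c.l2 * X 0 + C c.m2 * X 1)
      + (3 * C c.c0 * X 2 ^ 2 + 2 * C c.c1 * X 2 * X 3 + C c.c2 * X 3 ^ 2) := by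
    simp [cpoly, cval, pderiv_X]; ring
  have k3 : pderiv 3 (cpoly c) = C c.b0 * X 0 ^ 2 + C c.b1 * X 0 * X 1 + C c.b2 * X 1 ^ 2
      + X 3 * (2 * (C c.l3 * X 0 + C c.m3 * X 1)) + X 2 * (C c.l2 * X 0 + C c.m2 * X 1)
      + (3 * C c.c3 * X 3 ^ 2 + 2 * C c.c2 * X 2 * X 3 + C c.c1 * X 2 ^ 2) := by
    simp [cpoly, cval, pderiv_X]; ring
  constructor
  · rw [key, k2]; simp [algHom_C]
  · rw [key, k3]; simp [algHom_C]

end part1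

end CubicSurf

namespace CubicSurf

open MvPolynomial

section part2

variable {L : Type*} [Field L]

/-- First Gauss quadratic. -/
def cA (c : Coef L) (s t : L) : L := c.a0 * s ^ 2 + c.a1 * s * t + c.a2 * t ^ 2

/-- Second Gauss quadratic. -/
def cD (c : Coef L) (s t : L) : L := c.b0 * s ^ 2 + c.b1 * s * t + c.b2 * t ^ 2

/-- The Wronskian. -/
def cw (c : Coef L) (s t : L) : L :=
  (c.a0 * c.b1 - c.a1 * c.b0) * s ^ 2 + 2 * (c.a0 * c.b2 - c.a2 * c.b0) * s * t
    + (c.a1 * c.b2 - c.a2 * c.b1) * t ^ 2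

/-- The quintic. -/
def cQ (c : Coef L) (s t : L) : L :=
  cD c s t ^ 2 * (c.l1 * s + c.m1 * t) - cA c s t * cD c s t * (c.l2 * s + c.m2 * t)
    + cA c s t ^ 2 * (c.l3 * s + c.m3 * t)

lemma vec_add (e : Fin 4 → Fin 4 → L) (s t y z s' t' y' z' : L) :
    vec e s t y z + vec e s' t' y' z' = vec e (s + s') (t + t') (y + y') (z + z') := by
  simp only [vec]; module

lemma vec_smul (e : Fin 4 → Fin 4 → L) (k s t y z : L) :
    k • vec e s t y z = vec e (k * s) (k * t) (k * y) (k * z) := by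
  simp only [vec]; module

lemma vec_zero {e : Fin 4 → Fin 4 → L} (he : LinearIndependent L e) {s t y z : L}
    (h : vec e s t y z = 0) : s = 0 ∧ t = 0 ∧ y = 0 ∧ z = 0 := by
  have := Fintype.linearIndependent_iff.1 he ![s, t, y, z] (by
    rw [← h]; simp [vec, Fin.sum_univ_four])
  exact ⟨this 0, this 1, this 2, this 3⟩

lemma vec_inj {e : Fin 4 → Fin 4 → L} (he : LinearIndependent L e) {s t y z s' t' y' z' : L}
    (h : vec e s t y z = vec e s' t' y' z') : s = s' ∧ t = t' ∧ y = y' ∧ z = z' := by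
  have h1 : vec e (s - s') (t - t') (y - y') (z - z') = 0 := by
    rw [← sub_eq_zero] at h
    rw [← h]; simp only [vec]; module
  obtain ⟨a, b, c, d⟩ := vec_zero he h1
  exact ⟨sub_eq_zero.1 a, sub_eq_zero.1 b, sub_eq_zero.1 c, sub_eq_zero.1 d⟩

lemma exists_vec {e : Fin 4 → Fin 4 → L} (he : LinearIndependent L e) (v : Fin 4 → L) :
    ∃ s t y z, v = vec e s t y z := by
  have htop : Submodule.span L (Set.range e) = ⊤ :=
    he.span_eq_top_of_card_eq_finrank' (by simp)
  have : v ∈ Submodule.span L (Set.range e) := by rw [htop]; trivial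
  rw [Submodule.mem_span_range_iff_exists_fun] at this
  obtain ⟨k, hk⟩ := this
  exact ⟨k 0, k 1, k 2, k 3, by rw [← hk]; simp [vec, Fin.sum_univ_four]⟩

lemma finrank_span_pair {n : ℕ} {x y : Fin n → L} (h : LinearIndependent L ![x, y]) :
    Module.finrank L (Submodule.span L {x, y}) = 2 := by
  have := finrank_span_eq_card h
  rw [Matrix.range_cons, Matrix.range_cons, Matrix.range_empty, Set.union_empty,
    Set.singleton_union] at this
  simpa using this

lemma isLine_eq_span {n : ℕ} {W : Submodule L (Fin n → L)} (hW : IsLine W) {x y : Fin n → L}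
    (hx : x ∈ W) (hy : y ∈ W) (h : LinearIndependent L ![x, y]) :
    W = Submodule.span L {x, y} := by
  symm
  apply Submodule.eq_of_le_of_finrank_eq
  · rw [Submodule.span_le]
    rintro z (rfl | rfl) <;> assumption
  · rw [finrank_span_pair h, hW]

lemma indep_vec {e : Fin 4 → Fin 4 → L} (he : LinearIndependent L e) {s t y z s' t' : L}
    (h0 : s' ≠ 0 ∨ t' ≠ 0)
    (h : y ≠ 0 ∨ z ≠ 0) : LinearIndependent L ![vec e s' t' 0 0, vec e s t y z] := by
  rw [LinearIndependent.pair_iff]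
  intro p q hpq
  rw [vec_smul, vec_smul, vec_add] at hpq
  obtain ⟨h1, h2, h3, h4⟩ := vec_zero he hpq
  have hq : q = 0 := by
    rcases h with h | h
    · simpa [h] using h3
    · simpa [h] using h4
  subst hq
  rcases h0 with h | h
  · simpa [h] using h1
  · simpa [h] using h2

lemma indep_vec' {e : Fin 4 → Fin 4 → L} (he : LinearIndependent L e) {s t s' t' : L}
    (h : s * t' - s' * t ≠ 0) : LinearIndependent L ![vec e s t 0 0, vec e s' t' 0 0] := by
  rw [LinearIndependent.pair_iff]
  intro p q hpq
  rw [vec_smul, vec_smul, vec_add] at hpq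
  obtain ⟨h1, h2, h3, h4⟩ := vec_zero he hpq
  constructor
  · apply (mul_eq_zero.1 (_ : p * (s * t' - s' * t) = 0)).resolve_right h
    linear_combination t' * h1 - s' * h2
  · apply (mul_eq_zero.1 (_ : q * (s * t' - s' * t) = 0)).resolve_right h
    linear_combination s * h2 - t * h1

/-- The base line. -/
def bline (e : Fin 4 → Fin 4 → L) : Submodule L (Fin 4 → L) := Submodule.span L {e 0, e 1}

lemma mem_bline {e : Fin 4 → Fin 4 → L} {x : Fin 4 → L} :
    x ∈ bline e ↔ ∃ s t, x = vec e s t 0 0 := by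
  rw [bline, Submodule.mem_span_pair]
  simp [vec, eq_comm]

lemma isLine_bline {e : Fin 4 → Fin 4 → L} (he : LinearIndependent L e) : IsLine (bline e) := by
  apply finrank_span_pair
  have := indep_vec' he (s := 1) (t := 0) (s' := 0) (t' := 1) (by simp)
  simpa [vec] using this

/-- Candidate asymptotic lines. -/
def aline (e : Fin 4 → Fin 4 → L) (c : Coef L) (s0 t0 s t : L) : Submodule L (Fin 4 → L) :=
  Submodule.span L {vec e s0 t0 0 0, vec e s t (cD c s0 t0) (-cA c s0 t0)}

lemma st_ne {c : Coef L} {s0 t0 : L} (hAB : cA c s0 t0 ≠ 0 ∨ cD c s0 t0 ≠ 0) :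
    s0 ≠ 0 ∨ t0 ≠ 0 := by
  by_contra! h
  obtain ⟨rfl, rfl⟩ := h
  simp [cA, cD] at hAB

lemma indep_aline {e : Fin 4 → Fin 4 → L} (he : LinearIndependent L e) {c : Coef L} {s0 t0 : L}
    (s t : L) (hAB : cA c s0 t0 ≠ 0 ∨ cD c s0 t0 ≠ 0) :
    LinearIndependent L ![vec e s0 t0 0 0, vec e s t (cD c s0 t0) (-cA c s0 t0)] := by
  apply indep_vec he (st_ne hAB)
  rw [neg_ne_zero]; tauto

lemma bline_ne_aline {e : Fin 4 → Fin 4 → L} (he : LinearIndependent L e) {c : Coef L} {s0 t0 : L}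
    (s t : L) (hAB : cA c s0 t0 ≠ 0 ∨ cD c s0 t0 ≠ 0) : bline e ≠ aline e c s0 t0 s t := by
  intro h
  have : vec e s t (cD c s0 t0) (-cA c s0 t0) ∈ bline e := by
    rw [h]; exact Submodule.subset_span (by simp)
  obtain ⟨s', t', h'⟩ := mem_bline.1 this
  obtain ⟨_, _, h3, h4⟩ := vec_inj he h'
  rw [neg_eq_zero] at h4
  tauto

lemma aline_eq_iff {e : Fin 4 → Fin 4 → L} (he : LinearIndependent L e) {c : Coef L} {s0 t0 : L}
    (s t s' t' : L) (hAB : cA c s0 t0 ≠ 0 ∨ cD c s0 t0 ≠ 0) :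
    aline e c s0 t0 s t = aline e c s0 t0 s' t' ↔ t0 * s - s0 * t = t0 * s' - s0 * t' := by
  constructor
  · intro h
    have : vec e s' t' (cD c s0 t0) (-cA c s0 t0) ∈ aline e c s0 t0 s t := by
      rw [h]; exact Submodule.subset_span (by simp)
    rw [aline, Submodule.mem_span_pair] at this
    obtain ⟨p, q, h'⟩ := this
    rw [vec_smul, vec_smul, vec_add] at h'
    obtain ⟨h1, h2, h3, h4⟩ := vec_inj he h'
    have hq : q - 1 = 0 := by
      rcases hAB with hh | hh
      · apply (mul_eq_zero.1 (_ : (q - 1) * cA c s0 t0 = 0)).resolve_right hh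
        linear_combination -h4
      · apply (mul_eq_zero.1 (_ : (q - 1) * cD c s0 t0 = 0)).resolve_right hh
        linear_combination h3
    linear_combination -t0 * h1 * (-1) - s0 * h2 - (t0 * s - s0 * t) * hq
  · intro h
    have hk : ∃ k, s - s' = k * s0 ∧ t - t' = k * t0 := by
      rcases st_ne hAB with hh | hh
      · refine ⟨(s - s') / s0, by field_simp, ?_⟩
        field_simp
        linear_combination -h
      · refine ⟨(t - t') / t0, ?_, by field_simp⟩
        field_simp
        linear_combination h
    obtain ⟨k, h1, h2⟩ := hk
    symm
    apply isLine_eq_span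
    · exact finrank_span_pair (indep_aline he s' t' hAB)
    · exact Submodule.subset_span (by simp)
    · rw [aline, Submodule.mem_span_pair]
      refine ⟨k, 1, ?_⟩
      rw [vec_smul, vec_smul, vec_add, ← h1, ← h2]
      congr 1 <;> ring
    · exact indep_aline he s t hAB

lemma asym_iff {G : MvPolynomial (Fin 4) L} {e : Fin 4 → Fin 4 → L} {c : Coef L}
    (h : Adapted G e c) (he : LinearIndependent L e) {s0 t0 k : L} (hk : k ≠ 0)
    (hAB : cA c s0 t0 ≠ 0 ∨ cD c s0 t0 ≠ 0)
    {P : Projectivization L (Fin 4 → L)} (hP : P.rep = k • vec e s0 t0 0 0)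
    (W : Submodule L (Fin 4 → L)) :
    W ∈ AsymSet G P ↔ W = bline e ∨
      ∃ s t, cw c s0 t0 * (t0 * s - s0 * t) + cQ c s0 t0 = 0 ∧ W = aline e c s0 t0 s t := by
  have hst := st_ne hAB
  rw [vec_smul, mul_zero] at hP
  constructor
  · rintro ⟨hW, hPW, v, hv, hind, d, hd⟩
    obtain ⟨s, t, y, z, rfl⟩ := exists_vec he v
    rw [hP] at hd hPW hind
    rw [h.lineRestrict] at hd
    have h0 := bincubic_zero (p := cval (RingHom.id L) c (k * s0) (k * t0) 0 0)
      (q := cB c (k * s0) (k * t0) 0 0 s t y z) (r := cB c s t y z (k * s0) (k * t0) 0 0)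
      (s := cval (RingHom.id L) c s t y z - d) (by rw [C_sub]; linear_combination hd)
    obtain ⟨-, h1, h2, -⟩ := h0
    have h1' : cA c s0 t0 * y + cD c s0 t0 * z = 0 := by
      have : cB c (k * s0) (k * t0) 0 0 s t y z =
          k ^ 2 * (cA c s0 t0 * y + cD c s0 t0 * z) := by
        simp only [cA, cD, cB]; ring
      rw [this] at h1
      exact (mul_eq_zero.1 h1).resolve_left (pow_ne_zero 2 hk)
    have h2' : cB c s t y z s0 t0 0 0 = 0 := by
      have : cB c s t y z (k * s0) (k * t0) 0 0 = k * cB c s t y z s0 t0 0 0 := by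
        simp only [cB]; ring
      rw [this] at h2
      exact (mul_eq_zero.1 h2).resolve_left hk
    have hl : ∃ r, y = r * cD c s0 t0 ∧ z = r * -cA c s0 t0 := by
      rcases hAB with hh | hh
      · refine ⟨-z / cA c s0 t0, ?_, by field_simp⟩
        field_simp
        linear_combination h1'
      · refine ⟨y / cD c s0 t0, by field_simp, ?_⟩
        field_simp
        linear_combination h1'
    obtain ⟨r, rfl, rfl⟩ := hl
    by_cases hr : r = 0
    · left
      subst hr
      simp only [zero_mul] at hind hv
      rw [isLine_eq_span hW hPW hv hind, ← isLine_eq_span (isLine_bline he) _ _ hind]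
      · exact mem_bline.2 ⟨_, _, rfl⟩
      · exact mem_bline.2 ⟨_, _, rfl⟩
    · right
      refine ⟨s / r, t / r, ?_, ?_⟩
      · apply (mul_eq_zero.1 (_ : r ^ 2 * _ = 0)).resolve_left (pow_ne_zero 2 hr)
        have : r ^ 2 * (cw c s0 t0 * (t0 * (s / r) - s0 * (t / r)) + cQ c s0 t0) =
          r * cw c s0 t0 * (t0 * s - s0 * t) + r ^ 2 * cQ c s0 t0 := by field_simp
        rw [this]
        have : cB c s t (r * cD c s0 t0) (r * -cA c s0 t0) s0 t0 0 0 =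
            r * cw c s0 t0 * (t0 * s - s0 * t) + r ^ 2 * cQ c s0 t0 := by
          simp only [cw, cQ, cB, cA, cD]; ring
        rw [← this, h2']
      · apply isLine_eq_span hW _ _ (indep_aline he _ _ hAB)
        · have := W.smul_mem k⁻¹ hPW
          rw [vec_smul] at this
          simpa [hk] using this
        · have := W.smul_mem r⁻¹ hv
          rw [vec_smul] at this
          convert this using 2 <;> field_simp
  · rintro (rfl | ⟨s, t, h1, rfl⟩)
    · have hd : ∃ s t, k * s0 * t - s * (k * t0) ≠ 0 := by
        rcases hst with hh | hh
        · exact ⟨0, 1, by simp [hk, hh]⟩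
        · exact ⟨1, 0, by simp [hk, hh]⟩
      obtain ⟨s, t, hd⟩ := hd
      refine ⟨isLine_bline he, ?_, vec e s t 0 0, mem_bline.2 ⟨_, _, rfl⟩, ?_, 0, ?_⟩
      · rw [hP]; exact mem_bline.2 ⟨_, _, rfl⟩
      · rw [hP]; exact indep_vec' he hd
      · rw [hP, h.lineRestrict]; simp [cval, cB]
    · refine ⟨finrank_span_pair (indep_aline he _ _ hAB), ?_,
        vec e s t (cD c s0 t0) (-cA c s0 t0), Submodule.subset_span (by simp), ?_,
        cval (RingHom.id L) c s t (cD c s0 t0) (-cA c s0 t0), ?_⟩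
      · rw [hP, aline, Submodule.mem_span_pair]
        exact ⟨k, 0, by rw [vec_smul]; simp⟩
      · rw [hP]
        apply indep_vec he
        · rcases hst with hh | hh
          · left; exact mul_ne_zero hk hh
          · right; exact mul_ne_zero hk hh
        · rw [neg_ne_zero]; tauto
      · rw [hP, h.lineRestrict]
        have e1 : cval (RingHom.id L) c (k * s0) (k * t0) 0 0 = 0 := by simp [cval]
        have e2 : cB c (k * s0) (k * t0) 0 0 s t (cD c s0 t0) (-cA c s0 t0) = 0 := by
          simp only [cB, cA, cD]; ring
        have e3 : cB c s t (cD c s0 t0) (-cA c s0 t0) (k * s0) (k * t0) 0 0 = 0 := by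
          have : cB c s t (cD c s0 t0) (-cA c s0 t0) (k * s0) (k * t0) 0 0 =
              k * (cw c s0 t0 * (t0 * s - s0 * t) + cQ c s0 t0) := by
            simp only [cw, cQ, cB, cA, cD]; ring
          rw [this, h1, mul_zero]
        rw [e1, e2, e3]; simp

lemma asym_two {G : MvPolynomial (Fin 4) L} {e : Fin 4 → Fin 4 → L} {c : Coef L}
    (h : Adapted G e c) (he : LinearIndependent L e) {s0 t0 k : L} (hk : k ≠ 0)
    (hAB : cA c s0 t0 ≠ 0 ∨ cD c s0 t0 ≠ 0)
    {P : Projectivization L (Fin 4 → L)} (hP : P.rep = k • vec e s0 t0 0 0)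
    (hw : cw c s0 t0 ≠ 0) {s t : L}
    (hst : cw c s0 t0 * (t0 * s - s0 * t) + cQ c s0 t0 = 0) :
    AsymSet G P = {bline e, aline e c s0 t0 s t} := by
  ext W
  rw [asym_iff h he hk hAB hP]
  simp only [Set.mem_insert_iff, Set.mem_singleton_iff]
  constructor
  · rintro (h1 | ⟨s', t', h1, rfl⟩)
    · exact Or.inl h1
    · right
      rw [aline_eq_iff he _ _ _ _ hAB]
      apply mul_left_cancel₀ hw
      linear_combination h1 - hst
  · rintro (h1 | h1)
    · exact Or.inl h1
    · exact Or.inr ⟨s, t, hst, h1⟩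

lemma exists_st {s0 t0 : L} (h : s0 ≠ 0 ∨ t0 ≠ 0) (m : L) : ∃ s t, t0 * s - s0 * t = m := by
  rcases h with h | h
  · exact ⟨0, -m / s0, by field_simp; ring⟩
  · exact ⟨m / t0, 0, by field_simp; ring⟩

lemma parabolic_iff {G : MvPolynomial (Fin 4) L} {e : Fin 4 → Fin 4 → L} {c : Coef L}
    (h : Adapted G e c) (he : LinearIndependent L e) {s0 t0 k : L} (hk : k ≠ 0)
    (hAB : cA c s0 t0 ≠ 0 ∨ cD c s0 t0 ≠ 0)
    {P : Projectivization L (Fin 4 → L)} (hP : P.rep = k • vec e s0 t0 0 0) :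
    ParabolicAt G P ↔ cw c s0 t0 = 0 := by
  constructor
  · intro hp
    by_contra hw
    obtain ⟨s, t, hst⟩ := exists_st (st_ne hAB) (-cQ c s0 t0 / cw c s0 t0)
    apply hp
    refine ⟨_, _, bline_ne_aline he s t hAB, asym_two h he hk hAB hP hw ?_⟩
    rw [hst]; field_simp; ring
  · rintro hw ⟨W₁, W₂, hne, hW⟩
    have hiff := asym_iff h he hk hAB hP
    rw [hW, hw] at hiff
    simp only [Set.mem_insert_iff, Set.mem_singleton_iff, zero_mul, zero_add] at hiff
    by_cases hQ : cQ c s0 t0 = 0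
    · obtain ⟨s, t, hst⟩ := exists_st (st_ne hAB) (0 : L)
      obtain ⟨s', t', hst'⟩ := exists_st (st_ne hAB) (1 : L)
      have h1 := (hiff (bline e)).2 (Or.inl rfl)
      have h2 := (hiff (aline e c s0 t0 s t)).2 (Or.inr ⟨s, t, hQ, rfl⟩)
      have h3 := (hiff (aline e c s0 t0 s' t')).2 (Or.inr ⟨s', t', hQ, rfl⟩)
      have n1 := bline_ne_aline he s t hAB
      have n2 := bline_ne_aline he s' t' hAB
      have n3 : aline e c s0 t0 s t ≠ aline e c s0 t0 s' t' := by
        rw [ne_eq, aline_eq_iff he _ _ _ _ hAB, hst, hst']; simp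
      grind
    · have h1 := (hiff W₁).1 (Or.inl rfl)
      have h2 := (hiff W₂).1 (Or.inr rfl)
      simp [hQ] at h1 h2
      exact hne (h1.trans h2.symm)

lemma line_mem_asym {G : MvPolynomial (Fin 4) L} {W : Submodule L (Fin 4 → L)}
    {P : Projectivization L (Fin 4 → L)} (h1 : IsLine W) (h2 : LineOnSurf G W)
    (h3 : OnLine W P) : W ∈ AsymSet G P := by
  have : ∃ v ∈ W, v ∉ Submodule.span L {P.rep} := by
    by_contra! hc
    have hle : W ≤ Submodule.span L {P.rep} := hc
    have := Submodule.finrank_mono hle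
    rw [h1] at this
    have h4 := finrank_span_le_card (R := L) ({P.rep} : Set (Fin 4 → L))
    simp at h4
    omega
  obtain ⟨v, hv, hn⟩ := this
  refine ⟨h1, h3, v, hv, ?_, 0, by rw [h2 _ _ h3 hv]; simp⟩
  rw [LinearIndependent.pair_iff' P.rep_nonzero]
  intro a ha
  exact hn (by rw [← ha]; exact Submodule.smul_mem _ _ (Submodule.mem_span_singleton_self _))

lemma eckardt_parabolic {G : MvPolynomial (Fin 4) L}
    {P : Projectivization L (Fin 4 → L)} (h : EckardtAt G P) : ParabolicAt G P := by
  rintro ⟨V₁, V₂, hne, hV⟩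
  obtain ⟨W₁, W₂, W₃, n1, n2, n3, hW⟩ := h
  have h1 := hW W₁ (by simp)
  have h2 := hW W₂ (by simp)
  have h3 := hW W₃ (by simp)
  have m1 := line_mem_asym h1.1 h1.2.1 h1.2.2
  have m2 := line_mem_asym h2.1 h2.2.1 h2.2.2
  have m3 := line_mem_asym h3.1 h3.2.1 h3.2.2
  rw [hV] at m1 m2 m3
  simp only [Set.mem_insert_iff, Set.mem_singleton_iff] at m1 m2 m3
  grind

lemma eckardt_Q {G : MvPolynomial (Fin 4) L} {e : Fin 4 → Fin 4 → L} {c : Coef L}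
    (h : Adapted G e c) (he : LinearIndependent L e) {s0 t0 k : L} (hk : k ≠ 0)
    (hAB : cA c s0 t0 ≠ 0 ∨ cD c s0 t0 ≠ 0)
    {P : Projectivization L (Fin 4 → L)} (hP : P.rep = k • vec e s0 t0 0 0)
    (hw : cw c s0 t0 = 0) (hE : EckardtAt G P) : cQ c s0 t0 = 0 := by
  by_contra hQ
  obtain ⟨W₁, W₂, W₃, n1, n2, n3, hW⟩ := hE
  have h1 := hW W₁ (by simp)
  have h2 := hW W₂ (by simp)
  have m1 := line_mem_asym h1.1 h1.2.1 h1.2.2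
  have m2 := line_mem_asym h2.1 h2.2.1 h2.2.2
  rw [asym_iff h he hk hAB hP] at m1 m2
  simp [hw, hQ] at m1 m2
  exact n1 (m1.trans m2.symm)

lemma lineOnSurf_span {G : MvPolynomial (Fin 4) L} {x y : Fin 4 → L}
    (h : CubicSurf.lineRestrict G x y = 0) : LineOnSurf G (Submodule.span L {x, y}) := by
  intro u v hu hv
  rw [Submodule.mem_span_pair] at hu hv
  obtain ⟨a, b, rfl⟩ := hu
  obtain ⟨a', b', rfl⟩ := hv
  have h1 := congrArg (aeval (![C a * X 0 + C a' * X 1, C b * X 0 + C b' * X 1] :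
    Fin 2 → MvPolynomial (Fin 2) L)) h
  rw [map_zero] at h1
  rw [← h1, lineRestrict, lineRestrict, ← AlgHom.comp_apply, comp_aeval]
  congr 2
  funext i
  simp [algHom_C, MvPolynomial.algebraMap_eq]
  ring

/-- Sufficient condition for an Eckardt point. -/
lemma eckardt_of {G : MvPolynomial (Fin 4) L} {e : Fin 4 → Fin 4 → L} {c : Coef L}
    (h : Adapted G e c) (he : LinearIndependent L e) {s0 t0 k : L}
    (hAB : cA c s0 t0 ≠ 0 ∨ cD c s0 t0 ≠ 0)
    {P : Projectivization L (Fin 4 → L)} (hP : P.rep = k • vec e s0 t0 0 0)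
    (hw : cw c s0 t0 = 0) (hQ : cQ c s0 t0 = 0) {s t s' t' : L}
    (hne : t0 * s - s0 * t ≠ t0 * s' - s0 * t')
    (h1 : cval (RingHom.id L) c s t (cD c s0 t0) (-cA c s0 t0) = 0)
    (h2 : cval (RingHom.id L) c s' t' (cD c s0 t0) (-cA c s0 t0) = 0) : EckardtAt G P := by
  have key : ∀ s t, cval (RingHom.id L) c s t (cD c s0 t0) (-cA c s0 t0) = 0 →
      IsLine (aline e c s0 t0 s t) ∧ LineOnSurf G (aline e c s0 t0 s t) ∧
        OnLine (aline e c s0 t0 s t) P := by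
    intro s t hst
    refine ⟨finrank_span_pair (indep_aline he _ _ hAB), lineOnSurf_span ?_, ?_⟩
    · rw [h.lineRestrict, hst]
      have e1 : cval (RingHom.id L) c s0 t0 0 0 = 0 := by simp [cval]
      have e2 : cB c s0 t0 0 0 s t (cD c s0 t0) (-cA c s0 t0) = 0 := by
        simp only [cB, cA, cD]; ring
      have e3 : cB c s t (cD c s0 t0) (-cA c s0 t0) s0 t0 0 0 = 0 := by
        have : cB c s t (cD c s0 t0) (-cA c s0 t0) s0 t0 0 0 =
            cw c s0 t0 * (t0 * s - s0 * t) + cQ c s0 t0 := by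
          simp only [cw, cQ, cB, cA, cD]; ring
        rw [this, hw, hQ]; ring
      rw [e1, e2, e3]; simp
    · rw [OnLine, hP]
      exact Submodule.smul_mem _ _ (Submodule.subset_span (by simp))
  refine ⟨bline e, aline e c s0 t0 s t, aline e c s0 t0 s' t', bline_ne_aline he _ _ hAB,
    bline_ne_aline he _ _ hAB, ?_, ?_⟩
  · rwa [ne_eq, aline_eq_iff he _ _ _ _ hAB]
  · rintro W (rfl | rfl | rfl)
    · refine ⟨isLine_bline he, lineOnSurf_span ?_, ?_⟩
      · have := h.lineRestrict 1 0 0 0 0 1 0 0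
        simpa [vec, cval, cB] using this
      · rw [OnLine, hP]
        exact Submodule.smul_mem _ _ (mem_bline.2 ⟨_, _, rfl⟩)
    · exact key _ _ h1
    · exact key _ _ h2

end part2

end CubicSurf

namespace CubicSurf

open MvPolynomial

section part3

variable {L : Type*} [Field L]

lemma exists_quad_root [IsAlgClosed L] {a : L} (ha : a ≠ 0) (b c : L) :
    ∃ x, a * x ^ 2 + b * x + c = 0 := by
  obtain ⟨x, hx⟩ := IsAlgClosed.exists_root
    (Polynomial.C a * Polynomial.X ^ 2 + Polynomial.C b * Polynomial.X + Polynomial.C c)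
    (by rw [Polynomial.degree_quadratic ha]; decide)
  exact ⟨x, by simpa [Polynomial.IsRoot] using hx⟩

lemma exists_binquad_root [IsAlgClosed L] (a b c : L) :
    ∃ s t, (s ≠ 0 ∨ t ≠ 0) ∧ a * s ^ 2 + b * s * t + c * t ^ 2 = 0 := by
  by_cases ha : a = 0
  · exact ⟨1, 0, by simp, by simp [ha]⟩
  · obtain ⟨x, hx⟩ := exists_quad_root ha b c
    exact ⟨x, 1, by simp, by linear_combination hx⟩

/-- The resultant of the two Gauss quadratics does not vanish. -/
lemma res_ne [IsAlgClosed L] (c : Coef L)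
    (h : ∀ s t, s ≠ 0 ∨ t ≠ 0 → cA c s t ≠ 0 ∨ cD c s t ≠ 0) :
    (c.a0 * c.b2 - c.a2 * c.b0) ^ 2 -
      (c.a0 * c.b1 - c.a1 * c.b0) * (c.a1 * c.b2 - c.a2 * c.b1) ≠ 0 := by
  intro hr
  obtain ⟨s, hs⟩ := IsAlgClosed.exists_pow_nat_eq (c.a1 * c.b2 - c.a2 * c.b1) (n := 2) (by simp)
  obtain ⟨t, ht⟩ := IsAlgClosed.exists_pow_nat_eq (c.a0 * c.b1 - c.a1 * c.b0) (n := 2) (by simp)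
  have key : ∃ s t : L, s ^ 2 = (c.a1 * c.b2 - c.a2 * c.b1) ∧
      t ^ 2 = (c.a0 * c.b1 - c.a1 * c.b0) ∧ s * t = -(c.a0 * c.b2 - c.a2 * c.b0) := by
    have h1 : (s * t) ^ 2 = (c.a0 * c.b2 - c.a2 * c.b0) ^ 2 := by
      rw [mul_pow, hs, ht]; linear_combination -hr
    rcases sq_eq_sq_iff_eq_or_eq_neg.1 h1 with h2 | h2
    · exact ⟨-s, t, by rw [← hs]; ring, ht, by rw [← h2]; ring⟩
    · exact ⟨s, t, hs, ht, h2⟩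
  clear hs ht s t
  obtain ⟨s, t, hs, ht, hst⟩ := key
  by_cases h0 : s ≠ 0 ∨ t ≠ 0
  · have hA : cA c s t = 0 := by
      simp only [cA]
      linear_combination c.a0 * hs + c.a1 * hst + c.a2 * ht
    have hD : cD c s t = 0 := by
      simp only [cD]
      linear_combination c.b0 * hs + c.b1 * hst + c.b2 * ht
    rcases h s t h0 with h1 | h1
    · exact h1 hA
    · exact h1 hD
  · push Not at h0
    obtain ⟨rfl, rfl⟩ := h0
    have d1 : c.a1 * c.b2 = c.a2 * c.b1 := by linear_combination -hs
    have d2 : c.a0 * c.b1 = c.a1 * c.b0 := by linear_combination -ht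
    have d3 : c.a0 * c.b2 = c.a2 * c.b0 := by linear_combination hst
    by_cases ha : c.a0 = 0 ∧ c.a1 = 0 ∧ c.a2 = 0
    · obtain ⟨s, t, h1, h2⟩ := exists_binquad_root c.b0 c.b1 c.b2
      rcases h s t h1 with h3 | h3
      · apply h3; simp [cA, ha]
      · exact h3 h2
    · obtain ⟨s, t, h1, h2⟩ := exists_binquad_root c.a0 c.a1 c.a2
      rcases h s t h1 with h3 | h3
      · exact h3 h2
      · apply h3
        have e0 : c.a0 * cD c s t = 0 := by
          simp only [cD]; linear_combination c.b0 * h2 + s * t * d2 + t ^ 2 * d3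
        have e1 : c.a1 * cD c s t = 0 := by
          simp only [cD]; linear_combination c.b1 * h2 - s ^ 2 * d2 + t ^ 2 * d1
        have e2 : c.a2 * cD c s t = 0 := by
          simp only [cD]; linear_combination c.b2 * h2 - s ^ 2 * d3 - s * t * d1
        by_contra hD
        exact ha ⟨(mul_eq_zero.1 e0).resolve_right hD, (mul_eq_zero.1 e1).resolve_right hD,
          (mul_eq_zero.1 e2).resolve_right hD⟩

lemma vec_ne_zero {e : Fin 4 → Fin 4 → L} (he : LinearIndependent L e) {s t : L}
    (h : s ≠ 0 ∨ t ≠ 0) : vec e s t 0 0 ≠ 0 := by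
  intro h0
  have := vec_zero he h0
  tauto

/-- Points on the base line. -/
def bpt {e : Fin 4 → Fin 4 → L} (he : LinearIndependent L e) {s t : L}
    (h : s ≠ 0 ∨ t ≠ 0) : Projectivization L (Fin 4 → L) :=
  Projectivization.mk L (vec e s t 0 0) (vec_ne_zero he h)

lemma bpt_rep {e : Fin 4 → Fin 4 → L} (he : LinearIndependent L e) {s t : L}
    (h : s ≠ 0 ∨ t ≠ 0) : ∃ k : L, k ≠ 0 ∧ (bpt he h).rep = vec e (k * s) (k * t) 0 0 := by
  obtain ⟨a, ha⟩ := Projectivization.exists_smul_eq_mk_rep L (vec e s t 0 0) (vec_ne_zero he h)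
  refine ⟨a, a.ne_zero, ?_⟩
  rw [bpt, ← ha, Units.smul_def, vec_smul, mul_zero]

lemma bpt_eq_iff {e : Fin 4 → Fin 4 → L} (he : LinearIndependent L e) {s t s' t' : L}
    (h : s ≠ 0 ∨ t ≠ 0) (h' : s' ≠ 0 ∨ t' ≠ 0) :
    bpt he h = bpt he h' ↔ s * t' = s' * t := by
  rw [bpt, bpt, Projectivization.mk_eq_mk_iff']
  constructor
  · rintro ⟨a, ha⟩
    rw [vec_smul] at ha
    obtain ⟨h1, h2, -, -⟩ := vec_inj he ha
    rw [← h1, ← h2]; ring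
  · intro hst
    rcases h' with h' | h'
    · refine ⟨s / s', ?_⟩
      rw [vec_smul]
      congr 1
      · field_simp
      · field_simp; linear_combination hst
      · ring
      · ring
    · refine ⟨t / t', ?_⟩
      rw [vec_smul]
      congr 1
      · field_simp; linear_combination -hst
      · field_simp
      · ring
      · ring

lemma eq_bpt {e : Fin 4 → Fin 4 → L} (he : LinearIndependent L e)
    {P : Projectivization L (Fin 4 → L)} {s t : L} (h : P.rep = vec e s t 0 0) :
    ∃ h : s ≠ 0 ∨ t ≠ 0, P = bpt he h := by
  have h0 : s ≠ 0 ∨ t ≠ 0 := by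
    by_contra! hc
    obtain ⟨rfl, rfl⟩ := hc
    apply P.rep_nonzero
    rw [h]; simp [vec]
  refine ⟨h0, ?_⟩
  rw [← P.mk_rep, bpt, Projectivization.mk_eq_mk_iff']
  exact ⟨1, by rw [h]; simp⟩

/-- The set of zeros of a binary form on the base line. -/
def zpts (e : Fin 4 → Fin 4 → L) (f : L → L → L) : Set (Projectivization L (Fin 4 → L)) :=
  {P | ∃ s t, P.rep = vec e s t 0 0 ∧ f s t = 0}

lemma bpt_mem_zpts {e : Fin 4 → Fin 4 → L} (he : LinearIndependent L e) {f : L → L → L} {n : ℕ}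
    (hfh : ∀ k s t, f (k * s) (k * t) = k ^ n * f s t) {s t : L}
    (h : s ≠ 0 ∨ t ≠ 0) : bpt he h ∈ zpts e f ↔ f s t = 0 := by
  obtain ⟨k, hk, hr⟩ := bpt_rep he h
  constructor
  · rintro ⟨s', t', h1, h2⟩
    rw [hr] at h1
    obtain ⟨h3, h4, -, -⟩ := vec_inj he h1
    rw [← h3, ← h4, hfh] at h2
    exact (mul_eq_zero.1 h2).resolve_left (pow_ne_zero n hk)
  · intro h0
    exact ⟨_, _, hr, by rw [hfh, h0, mul_zero]⟩

lemma count_zpts [IsAlgClosed L] {e : Fin 4 → Fin 4 → L} (he : LinearIndependent L e) {n : ℕ}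
    (hn : 0 < n) (p : Polynomial L) (f : L → L → L)
    (hf1 : ∀ x, f x 1 = p.eval x) (hfh : ∀ k s t, f (k * s) (k * t) = k ^ n * f s t)
    (hinf : f 1 0 = p.coeff n) (hdeg : p.natDegree ≤ n)
    (hsep : ∀ x, p.eval x = 0 → p.derivative.eval x ≠ 0)
    (hc : p.coeff n = 0 → p.coeff (n - 1) ≠ 0) : (zpts e f).ncard = n := by
  classical
  have hp : p ≠ 0 := by
    rintro rfl
    simp at hc
  have hcard : p.roots.toFinset.card = p.natDegree := by
    rw [Multiset.toFinset_card_of_nodup, ← IsAlgClosed.card_roots_eq_natDegree]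
    rw [Multiset.nodup_iff_count_le_one]
    intro x
    rw [Polynomial.count_roots]
    by_contra! hx
    rw [Polynomial.one_lt_rootMultiplicity_iff_isRoot hp] at hx
    exact hsep x hx.1 hx.2
  let g : L → Projectivization L (Fin 4 → L) := fun x => bpt he (s := x) (t := 1) (by simp)
  have hg : Function.Injective g := by
    intro x y hxy
    have := (bpt_eq_iff he _ _).1 hxy
    simpa using this
  let i : Projectivization L (Fin 4 → L) := bpt he (s := 1) (t := 0) (by simp)
  have hgi : ∀ x, g x ≠ i := by
    intro x hx
    have := (bpt_eq_iff he _ _).1 hx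
    simp at this
  have hmem : ∀ P, P ∈ zpts e f ↔ (∃ x, p.eval x = 0 ∧ g x = P) ∨ (P = i ∧ p.coeff n = 0) := by
    intro P
    constructor
    · intro hP
      obtain ⟨s, t, h1, h2⟩ := id hP
      obtain ⟨h0, rfl⟩ := eq_bpt he h1
      by_cases ht : t = 0
      · right
        have hi : bpt he h0 = i := by
          rw [bpt_eq_iff]; simp [ht]
        refine ⟨hi, ?_⟩
        rw [hi, bpt_mem_zpts he hfh] at hP
        rw [← hinf, hP]
      · left
        have hi : g (s / t) = bpt he h0 := by
          simp only [g]
          rw [bpt_eq_iff]; field_simp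
        refine ⟨s / t, ?_, hi⟩
        rw [← hi, bpt_mem_zpts he hfh] at hP
        rw [← hf1, hP]
    · rintro (⟨x, hx, rfl⟩ | ⟨rfl, h0⟩)
      · rw [bpt_mem_zpts he hfh, hf1, hx]
      · rw [bpt_mem_zpts he hfh, hinf, h0]
  by_cases h0 : p.coeff n = 0
  · have hd : p.natDegree = n - 1 := by
      apply le_antisymm
      · have hne : p.natDegree ≠ n := by
          intro hh
          rw [← hh] at h0
          exact hp (Polynomial.leadingCoeff_eq_zero.1 h0)
        omega
      · exact Polynomial.le_natDegree_of_ne_zero (hc h0)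
    have hs : zpts e f = ((insert i (p.roots.toFinset.image g) : Finset _) : Set _) := by
      ext P
      rw [hmem]
      simp [hp, h0, or_comm]
    rw [hs, Set.ncard_coe_finset, Finset.card_insert_of_notMem, Finset.card_image_of_injective _ hg,
      hcard, hd]
    · omega
    · intro hi
      obtain ⟨x, _, hx⟩ := Finset.mem_image.1 hi
      exact hgi x hx
  · have hd : p.natDegree = n := le_antisymm hdeg (Polynomial.le_natDegree_of_ne_zero h0)
    have hs : zpts e f = ((p.roots.toFinset.image g : Finset _) : Set _) := by
      ext P
      rw [hmem]
      simp [hp, h0]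
    rw [hs, Set.ncard_coe_finset, Finset.card_image_of_injective _ hg, hcard, hd]

lemma cw_hom (c : Coef L) (k s t : L) : cw c (k * s) (k * t) = k ^ 2 * cw c s t := by
  simp only [cw]; ring

lemma cQ_hom (c : Coef L) (k s t : L) : cQ c (k * s) (k * t) = k ^ 5 * cQ c s t := by
  simp only [cQ, cA, cD]; ring

lemma count_w [IsAlgClosed L] {e : Fin 4 → Fin 4 → L} (he : LinearIndependent L e)
    (c : Coef L) (h2 : (2 : L) ≠ 0)
    (hr : (c.a0 * c.b2 - c.a2 * c.b0) ^ 2 -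
      (c.a0 * c.b1 - c.a1 * c.b0) * (c.a1 * c.b2 - c.a2 * c.b1) ≠ 0) :
    (zpts e (cw c)).ncard = 2 := by
  set D1 := c.a0 * c.b1 - c.a1 * c.b0 with hD1
  set D2 := c.a0 * c.b2 - c.a2 * c.b0 with hD2
  set D3 := c.a1 * c.b2 - c.a2 * c.b1 with hD3
  have hw : ∀ s t, cw c s t = D1 * s ^ 2 + 2 * D2 * s * t + D3 * t ^ 2 := fun s t => rfl
  let p : Polynomial L := Polynomial.C D1 * Polynomial.X ^ 2 +
    Polynomial.C (2 * D2) * Polynomial.X + Polynomial.C D3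
  have c2 : p.coeff 2 = D1 := by simp [p, -map_mul, Polynomial.coeff_C, Polynomial.coeff_X]
  have c1 : p.coeff 1 = 2 * D2 := by
    simp [p, -map_mul, Polynomial.coeff_X_pow, Polynomial.coeff_C]
  apply count_zpts he (by simp) p
  · intro x; rw [hw]; simp [p]
  · exact cw_hom c
  · rw [hw, c2]; ring
  · exact Polynomial.natDegree_quadratic_le
  · intro x hx hx'
    have e1 : D1 * x ^ 2 + 2 * D2 * x + D3 = 0 := by simpa [p] using hx
    have e2 : 2 * (D1 * x + D2) = 0 := by
      have : p.derivative.eval x = 2 * (D1 * x + D2) := by simp [p]; ring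
      rw [← this, hx']
    have e3 := (mul_eq_zero.1 e2).resolve_left h2
    apply hr
    linear_combination (D2 + D1 * x) * e3 - D1 * e1
  · intro h0
    rw [c2] at h0
    rw [show 2 - 1 = 1 from rfl, c1]
    apply mul_ne_zero h2
    intro hh
    apply hr
    rw [h0, hh]; ring

lemma count_w_one [IsAlgClosed L] {e : Fin 4 → Fin 4 → L} (he : LinearIndependent L e)
    (c : Coef L) (h2 : (2 : L) = 0)
    (hr : (c.a0 * c.b1 - c.a1 * c.b0) ≠ 0 ∨ (c.a1 * c.b2 - c.a2 * c.b1) ≠ 0) :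
    (zpts e (cw c)).ncard = 1 := by
  set D1 := c.a0 * c.b1 - c.a1 * c.b0 with hD1
  set D3 := c.a1 * c.b2 - c.a2 * c.b1 with hD3
  have hw : ∀ s t, cw c s t = D1 * s ^ 2 + D3 * t ^ 2 := fun s t => by
    simp only [cw]; rw [h2]; ring
  obtain ⟨α, hα⟩ := IsAlgClosed.exists_pow_nat_eq D1 (n := 2) (by simp)
  obtain ⟨β, hβ⟩ := IsAlgClosed.exists_pow_nat_eq D3 (n := 2) (by simp)
  have hw' : ∀ s t, cw c s t = (α * s - (-β) * t) ^ 2 := fun s t => by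
    rw [hw, ← hα, ← hβ]; linear_combination - α * s * β * t * h2
  have hne : -β ≠ 0 ∨ α ≠ 0 := by
    rw [neg_ne_zero]
    rcases hr with h | h
    · right; rintro rfl; apply h; rw [← hα]; simp
    · left; rintro rfl; apply h; rw [← hβ]; simp
  rw [Set.ncard_eq_one]
  refine ⟨bpt he hne, ?_⟩
  ext P
  rw [Set.mem_singleton_iff]
  constructor
  · rintro ⟨s, t, h1, h3⟩
    obtain ⟨h0, rfl⟩ := eq_bpt he h1
    rw [bpt_eq_iff]
    rw [hw'] at h3
    have := pow_eq_zero_iff (two_ne_zero) |>.1 h3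
    linear_combination this
  · rintro rfl
    rw [bpt_mem_zpts he (cw_hom c), hw']; ring

lemma quintic_nosing [IsAlgClosed L] (c : Coef L) (h2 : (2 : L) = 0)
    (ha0 : c.a0 = 1) (ha1 : c.a1 = 0) (ha2 : c.a2 = 0)
    (hb0 : c.b0 = 0) (hb1 : c.b1 = 0) (hb2 : c.b2 = 1)
    (hns : ∀ s t y z, cval (RingHom.id L) c s t y z = 0 → cB c s t y z 1 0 0 0 = 0 →
      cB c s t y z 0 1 0 0 = 0 → cB c s t y z 0 0 1 0 = 0 → cB c s t y z 0 0 0 1 = 0 →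
      s = 0 ∧ t = 0 ∧ y = 0 ∧ z = 0) {S T : L}
    (h3 : c.l3 * S ^ 4 - c.l2 * S ^ 2 * T ^ 2 + c.l1 * T ^ 4 = 0)
    (h4 : c.m3 * S ^ 4 - c.m2 * S ^ 2 * T ^ 2 + c.m1 * T ^ 4 = 0) : S = 0 ∧ T = 0 := by
  set y := T ^ 2 with hy
  set z := -S ^ 2 with hz
  obtain ⟨α, hα⟩ := IsAlgClosed.exists_pow_nat_eq
    (-(3 * c.c0 * y ^ 2 + 2 * c.c1 * y * z + c.c2 * z ^ 2)) (n := 2) (by simp)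
  obtain ⟨β, hβ⟩ := IsAlgClosed.exists_pow_nat_eq
    (-(c.c1 * y ^ 2 + 2 * c.c2 * y * z + 3 * c.c3 * z ^ 2)) (n := 2) (by simp)
  obtain ⟨r, hr⟩ := exists_quad_root (one_ne_zero (α := L)) (-(c.l2 * S + c.m2 * T))
    (-(c.l2 * α + c.m2 * β))
  set p := S * r + α with hp
  set q := T * r + β with hq
  have hr' : r ^ 2 = c.l2 * p + c.m2 * q := by rw [hp, hq]; linear_combination hr
  have g1 : cB c p q y z 1 0 0 0 = 0 := by
    simp only [cB, ha0, ha1, ha2, hb0, hb1, hb2]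
    linear_combination h3 + y * p * h2 + (c.l1 * (y + T ^ 2) + c.l2 * z) * hy
      + (c.l2 * T ^ 2 + c.l3 * (z - S ^ 2)) * hz
  have g2 : cB c p q y z 0 1 0 0 = 0 := by
    simp only [cB, ha0, ha1, ha2, hb0, hb1, hb2]
    linear_combination h4 + z * q * h2 + (c.m1 * (y + T ^ 2) + c.m2 * z) * hy
      + (c.m2 * T ^ 2 + c.m3 * (z - S ^ 2)) * hz
  have g3 : cB c p q y z 0 0 1 0 = 0 := by
    have hp2 : p ^ 2 = S ^ 2 * r ^ 2 + α ^ 2 := by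
      rw [hp]; linear_combination S * r * α * h2
    rw [hr', hα] at hp2
    simp only [cB, ha0, ha1, ha2, hb0, hb1, hb2]
    linear_combination hp2 + y * (c.l1 * p + c.m1 * q) * h2 + (c.l2 * p + c.m2 * q) * hz
  have g4 : cB c p q y z 0 0 0 1 = 0 := by
    have hp2 : q ^ 2 = T ^ 2 * r ^ 2 + β ^ 2 := by
      rw [hq]; linear_combination T * r * β * h2
    rw [hr', hβ] at hp2
    simp only [cB, ha0, ha1, ha2, hb0, hb1, hb2]
    linear_combination hp2 + z * (c.l3 * p + c.m3 * q) * h2 + (c.l2 * p + c.m2 * q) * hy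
      + T ^ 2 * (c.l2 * p + c.m2 * q) * h2
  have g0 : cval (RingHom.id L) c p q y z = 0 := by
    have euler : 3 * cval (RingHom.id L) c p q y z = p * cB c p q y z 1 0 0 0
      + q * cB c p q y z 0 1 0 0 + y * cB c p q y z 0 0 1 0 + z * cB c p q y z 0 0 0 1 := by
      simp only [cval, cB, RingHom.id_apply]; ring
    rw [g1, g2, g3, g4] at euler
    linear_combination euler - cval (RingHom.id L) c p q y z * h2
  obtain ⟨-, -, hy0, hz0⟩ := hns _ _ _ _ g0 g1 g2 g3 g4
  constructor
  · have : S ^ 2 = 0 := by linear_combination -hz0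
    simpa using this
  · have : T ^ 2 = 0 := by linear_combination hy0
    simpa using this

lemma count_Q [IsAlgClosed L] {e : Fin 4 → Fin 4 → L} (he : LinearIndependent L e)
    (c : Coef L)
    (ha0 : c.a0 = 1) (ha1 : c.a1 = 0) (ha2 : c.a2 = 0)
    (hb0 : c.b0 = 0) (hb1 : c.b1 = 0) (hb2 : c.b2 = 1) (h2 : (2 : L) = 0)
    (hns : ∀ S T : L, c.l3 * S ^ 4 - c.l2 * S ^ 2 * T ^ 2 + c.l1 * T ^ 4 = 0 →
      c.m3 * S ^ 4 - c.m2 * S ^ 2 * T ^ 2 + c.m1 * T ^ 4 = 0 → S = 0 ∧ T = 0) :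
    (zpts e (cQ c)).ncard = 5 := by
  have hQ : ∀ s t, cQ c s t = c.l3 * s ^ 5 + c.m3 * s ^ 4 * t - c.l2 * s ^ 3 * t ^ 2
      - c.m2 * s ^ 2 * t ^ 3 + c.l1 * s * t ^ 4 + c.m1 * t ^ 5 := fun s t => by
    simp only [cQ, cA, cD, ha0, ha1, ha2, hb0, hb1, hb2]; ring
  let p : Polynomial L := Polynomial.C c.l3 * Polynomial.X ^ 5 +
    Polynomial.C c.m3 * Polynomial.X ^ 4 - Polynomial.C c.l2 * Polynomial.X ^ 3
    - Polynomial.C c.m2 * Polynomial.X ^ 2 + Polynomial.C c.l1 * Polynomial.X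
    + Polynomial.C c.m1
  have c5 : p.coeff 5 = c.l3 := by
    simp [p, Polynomial.coeff_C, Polynomial.coeff_X, Polynomial.coeff_X_pow]
  have c4 : p.coeff 4 = c.m3 := by
    simp [p, Polynomial.coeff_C, Polynomial.coeff_X, Polynomial.coeff_X_pow]
  apply count_zpts he (by simp) p
  · intro x; rw [hQ]; simp [p]
  · exact cQ_hom c
  · rw [hQ, c5]; ring
  · simp only [p]; compute_degree
  · intro x hx hx'
    have e1 : c.l3 * x ^ 5 + c.m3 * x ^ 4 - c.l2 * x ^ 3 - c.m2 * x ^ 2 + c.l1 * x + c.m1 = 0 := by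
      simpa [p] using hx
    have e2 : 5 * c.l3 * x ^ 4 + 4 * c.m3 * x ^ 3 - 3 * c.l2 * x ^ 2 - 2 * c.m2 * x + c.l1 = 0 := by
      have : p.derivative.eval x = 5 * c.l3 * x ^ 4 + 4 * c.m3 * x ^ 3 - 3 * c.l2 * x ^ 2
        - 2 * c.m2 * x + c.l1 := by simp [p]; ring
      rw [← this, hx']
    have e3 : c.l3 * x ^ 4 - c.l2 * x ^ 2 * 1 ^ 2 + c.l1 * 1 ^ 4 = 0 := by
      linear_combination e2 - (2 * c.l3 * x ^ 4 + 2 * c.m3 * x ^ 3 - c.l2 * x ^ 2 - c.m2 * x) * h2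
    have := hns x 1 e3 (by linear_combination e1 - x * e3)
    simp at this
  · intro h0
    rw [c5] at h0
    rw [show 5 - 1 = 4 from rfl, c4]
    intro h1
    have := hns 1 0 (by rw [h0]; ring) (by rw [h1]; ring)
    simp at this

lemma eckardt_of_Q [IsAlgClosed L] {G : MvPolynomial (Fin 4) L} {e : Fin 4 → Fin 4 → L}
    {c : Coef L} (h : Adapted G e c) (he : LinearIndependent L e)
    (ha0 : c.a0 = 1) (ha1 : c.a1 = 0) (ha2 : c.a2 = 0)
    (hb0 : c.b0 = 0) (hb1 : c.b1 = 0) (hb2 : c.b2 = 1) (h2 : (2 : L) = 0)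
    (hns : ∀ S T : L, c.l3 * S ^ 4 - c.l2 * S ^ 2 * T ^ 2 + c.l1 * T ^ 4 = 0 →
      c.m3 * S ^ 4 - c.m2 * S ^ 2 * T ^ 2 + c.m1 * T ^ 4 = 0 → S = 0 ∧ T = 0)
    {S T : L} (hst : S ≠ 0 ∨ T ≠ 0)
    {P : Projectivization L (Fin 4 → L)} (hP : P.rep = vec e S T 0 0)
    (hQ : cQ c S T = 0) : EckardtAt G P := by
  have hA : cA c S T = S ^ 2 := by simp only [cA, ha0, ha1, ha2]; ring
  have hD : cD c S T = T ^ 2 := by simp only [cD, hb0, hb1, hb2]; ring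
  have hw : cw c S T = 0 := by
    simp only [cw, ha0, ha1, ha2, hb0, hb1, hb2]; linear_combination S * T * h2
  have hAB : cA c S T ≠ 0 ∨ cD c S T ≠ 0 := by
    rw [hA, hD]; simpa using hst
  set qs := c.l3 * S ^ 4 - c.l2 * S ^ 2 * T ^ 2 + c.l1 * T ^ 4 with hqs
  set qt := c.m3 * S ^ 4 - c.m2 * S ^ 2 * T ^ 2 + c.m1 * T ^ 4 with hqt
  have hsum : qs * S + qt * T = 0 := by
    rw [← hQ, hqs, hqt]; simp only [cQ, hA, hD]; ring
  have hk : ∃ k, qs = k * T ∧ qt = -k * S := by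
    rcases hst with hh | hh
    · refine ⟨-qt / S, ?_, by field_simp⟩
      field_simp; linear_combination hsum
    · refine ⟨qs / T, by field_simp, ?_⟩
      field_simp; linear_combination hsum
  obtain ⟨k, hk1, hk2⟩ := hk
  have hk0 : k ≠ 0 := by
    rintro rfl
    have := hns S T (by rw [← hqs, hk1]; ring) (by rw [← hqt, hk2]; ring)
    tauto
  obtain ⟨r, hr⟩ := exists_quad_root (one_ne_zero (α := L)) k
    (c.c0 * (T ^ 2) ^ 3 + c.c1 * (T ^ 2) ^ 2 * (-S ^ 2) + c.c2 * T ^ 2 * (-S ^ 2) ^ 2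
      + c.c3 * (-S ^ 2) ^ 3)
  have key : ∀ s t, cval (RingHom.id L) c s t (cD c S T) (-cA c S T) =
      (T * s - S * t) ^ 2 + k * (T * s - S * t) + (c.c0 * (T ^ 2) ^ 3
        + c.c1 * (T ^ 2) ^ 2 * (-S ^ 2) + c.c2 * T ^ 2 * (-S ^ 2) ^ 2
      + c.c3 * (-S ^ 2) ^ 3) := by
    intro s t
    rw [hA, hD]
    simp only [cval, RingHom.id_apply, ha0, ha1, ha2, hb0, hb1, hb2]
    linear_combination s * hk1 + t * hk2 + (T * s * S * t - S ^ 2 * t ^ 2) * h2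
      - s * hqs - t * hqt
  obtain ⟨s, t, e1⟩ := exists_st hst r
  obtain ⟨s', t', e2⟩ := exists_st hst (r + k)
  refine eckardt_of h he hAB (k := 1) (by rw [one_smul, hP]) hw hQ (s := s) (t := t) (s' := s')
    (t' := t') ?_ ?_ ?_
  · rw [e1, e2]; simpa using hk0
  · rw [key, e1]; linear_combination hr
  · rw [key, e2]; linear_combination hr + (r * k + k ^ 2) * h2

end part3

end CubicSurf

namespace CubicSurf

open MvPolynomial

section part4

variable {K L : Type*} [Field K] [Field L]

lemma clVec_vec (φ : K →+* L) (e : Fin 4 → Fin 4 → K) (s t y z : K) :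
    clVec φ (vec e s t y z) = vec (fun j => clVec φ (e j)) (φ s) (φ t) (φ y) (φ z) := by
  funext i
  simp [clVec, vec]

lemma span_clVec_pair (φ : K →+* L) (x y : Fin 4 → K) :
    Submodule.span L (clVec φ '' (Submodule.span K {x, y} : Set (Fin 4 → K))) =
      Submodule.span L {clVec φ x, clVec φ y} := by
  apply le_antisymm
  · rw [Submodule.span_le]
    rintro _ ⟨v, hv, rfl⟩
    obtain ⟨a, b, rfl⟩ := Submodule.mem_span_pair.1 hv
    refine Submodule.mem_span_pair.2 ⟨φ a, φ b, ?_⟩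
    funext i
    simp [clVec]
  · apply Submodule.span_mono
    rintro _ (rfl | rfl)
    · exact ⟨x, Submodule.subset_span (by simp), rfl⟩
    · exact ⟨y, Submodule.subset_span (by simp), rfl⟩

lemma clVec_indep (φ : K →+* L) {e : Fin 4 → Fin 4 → K} (he : LinearIndependent K e) :
    LinearIndependent L (fun j => clVec φ (e j)) := by
  have h1 : IsUnit (Matrix.of e) := Matrix.linearIndependent_rows_iff_isUnit.1 he
  have h2 := h1.map (φ.mapMatrix (m := Fin 4))
  exact Matrix.linearIndependent_rows_iff_isUnit.2 h2

lemma exists_basis {W : Submodule K (Fin 4 → K)} (hW : IsLine W) :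
    ∃ e : Fin 4 → Fin 4 → K, LinearIndependent K e ∧ e 0 ∈ W ∧ e 1 ∈ W := by
  let b := Module.finBasisOfFinrankEq K W hW
  have hb : LinearIndependent K (fun i => (b i : Fin 4 → K)) :=
    b.linearIndependent.map' W.subtype (Submodule.ker_subtype W)
  obtain ⟨x, hx⟩ := exists_linearIndependent_snoc_of_lt_finrank hb (by simp)
  obtain ⟨y, hy⟩ := exists_linearIndependent_snoc_of_lt_finrank hx (by simp)
  exact ⟨_, hy, (b 0).2, (b 1).2⟩

lemma eval_coef_map (φ : K →+* L) (c : Coef K) (s t : K) :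
    cA (c.map φ) (φ s) (φ t) = φ (cA c s t) ∧ cD (c.map φ) (φ s) (φ t) = φ (cD c s t) ∧
    cw (c.map φ) (φ s) (φ t) = φ (cw c s t) ∧ cQ (c.map φ) (φ s) (φ t) = φ (cQ c s t) := by
  have h2 : φ 2 = 2 := map_ofNat φ 2
  simp [cA, cD, cw, cQ, Coef.map, h2]

/-- All the data attached to a basis adapted to the line. -/
structure Setup (F : MvPolynomial (Fin 4) K) (W : Submodule K (Fin 4 → K))
    (e : Fin 4 → Fin 4 → K) (c : Coef K) (e' : Fin 4 → Fin 4 → AlgebraicClosure K)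
    (c' : Coef (AlgebraicClosure K)) : Prop where
  he' : e' = fun j => clVec (algebraMap K (AlgebraicClosure K)) (e j)
  hc' : c' = c.map (algebraMap K (AlgebraicClosure K))
  ind : LinearIndependent K e
  ind' : LinearIndependent (AlgebraicClosure K) e'
  ad : Adapted F e c
  ad' : Adapted (clF F) e' c'
  hW : W = bline e
  hW' : clLine W = bline e'
  ns : ∀ s t y z, cval (RingHom.id (AlgebraicClosure K)) c' s t y z = 0 →
      cB c' s t y z 1 0 0 0 = 0 →
      cB c' s t y z 0 1 0 0 = 0 → cB c' s t y z 0 0 1 0 = 0 → cB c' s t y z 0 0 0 1 = 0 →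
      s = 0 ∧ t = 0 ∧ y = 0 ∧ z = 0
  ab : ∀ s t, s ≠ 0 ∨ t ≠ 0 → cA c' s t ≠ 0 ∨ cD c' s t ≠ 0

lemma exists_setup {F : MvPolynomial (Fin 4) K} (hF : SmoothCubic F)
    {W : Submodule K (Fin 4 → K)} (hl : IsLine W) (hS : LineOnSurf F W)
    {e : Fin 4 → Fin 4 → K} (he : LinearIndependent K e) (h0 : e 0 ∈ W) (h1 : e 1 ∈ W) :
    ∃ c e' c', Setup F W e c e' c' := by
  obtain ⟨c, hc⟩ := exists_adapted F hF.1 e (hS _ _ h0 h1)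
  have hind' := clVec_indep (algebraMap K (AlgebraicClosure K)) he
  have had' := hc.map (algebraMap K (AlgebraicClosure K))
  have hW : W = bline e := by
    apply isLine_eq_span hl h0 h1
    have := indep_vec' he (s := 1) (t := 0) (s' := 0) (t' := 1) (by simp)
    simpa [vec] using this
  have hns : ∀ s t y z, cval (RingHom.id (AlgebraicClosure K))
      (c.map (algebraMap K (AlgebraicClosure K))) s t y z = 0 →
      cB (c.map (algebraMap K (AlgebraicClosure K))) s t y z 1 0 0 0 = 0 →
      cB (c.map (algebraMap K (AlgebraicClosure K))) s t y z 0 1 0 0 = 0 →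
      cB (c.map (algebraMap K (AlgebraicClosure K))) s t y z 0 0 1 0 = 0 →
      cB (c.map (algebraMap K (AlgebraicClosure K))) s t y z 0 0 0 1 = 0 →
      s = 0 ∧ t = 0 ∧ y = 0 ∧ z = 0 := by
    intro s t y z a0 a1 a2 a3 a4
    exact had'.nonsing hind' (hF.1.map _) hF.2 a0 a1 a2 a3 a4
  refine ⟨c, _, _, rfl, rfl, he, hind', hc, had', hW, ?_, hns, ?_⟩
  · rw [hW]
    exact span_clVec_pair _ _ _
  · intro s t hst
    by_contra hcon
    push Not at hcon
    obtain ⟨hA, hD⟩ := hcon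
    have := hns s t 0 0 (by simp [cval]) (by simp [cB]) (by simp [cB])
      (by simpa [cB, cA] using hA) (by simpa [cB, cD] using hD)
    rcases hst with h | h
    · exact h this.1
    · exact h this.2.1

variable {F : MvPolynomial (Fin 4) K} {W : Submodule K (Fin 4 → K)}
    {e : Fin 4 → Fin 4 → K} {c : Coef K} {e' : Fin 4 → Fin 4 → AlgebraicClosure K}
    {c' : Coef (AlgebraicClosure K)}

lemma ne_of_rep {e : Fin 4 → Fin 4 → L} {P : Projectivization L (Fin 4 → L)} {s t : L}
    (h : P.rep = vec e s t 0 0) : s ≠ 0 ∨ t ≠ 0 := by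
  by_contra hcon
  push Not at hcon
  apply P.rep_nonzero
  rw [h, hcon.1, hcon.2]
  simp [vec]

lemma Setup.parab (S : Setup F W e c e' c') :
    {P | OnLine (clLine W) P ∧ ParabolicAt (clF F) P} = zpts e' (cw c') := by
  ext P
  simp only [Set.mem_setOf_eq, zpts, OnLine, S.hW', mem_bline]
  constructor
  · rintro ⟨⟨s, t, h⟩, hp⟩
    refine ⟨s, t, h, (parabolic_iff S.ad' S.ind' one_ne_zero (S.ab s t (ne_of_rep h)) ?_).1 hp⟩
    rw [one_smul, h]
  · rintro ⟨s, t, h, hw⟩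
    refine ⟨⟨s, t, h⟩,
      (parabolic_iff S.ad' S.ind' one_ne_zero (S.ab s t (ne_of_rep h)) ?_).2 hw⟩
    rw [one_smul, h]

lemma Setup.eck_bound {n : ℕ} (S : Setup F W e c e' c')
    (hn : (zpts e' (cw c')).ncard = n) (hn0 : n ≠ 0) :
    {P | OnLine (clLine W) P ∧ ParabolicAt (clF F) P}.ncard = n ∧
      {P | OnLine (clLine W) P ∧ EckardtAt (clF F) P}.Finite ∧
      {P | OnLine (clLine W) P ∧ EckardtAt (clF F) P}.ncard ≤ n := by
  rw [← S.parab] at hn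
  have hfin : {P | OnLine (clLine W) P ∧ ParabolicAt (clF F) P}.Finite :=
    Set.finite_of_ncard_ne_zero (by rw [hn]; exact hn0)
  have hsub : {P | OnLine (clLine W) P ∧ EckardtAt (clF F) P} ⊆
      {P | OnLine (clLine W) P ∧ ParabolicAt (clF F) P} :=
    fun P hP => ⟨hP.1, eckardt_parabolic hP.2⟩
  exact ⟨hn, hfin.subset hsub, hn ▸ Set.ncard_le_ncard hsub hfin⟩

lemma Setup.part1 (S : Setup F W e c e' c') {P : Projectivization K (Fin 4 → K)}
    (hP : OnLine W P) : IsParabolic F P ∨ IsHyperbolic F P := by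
  rw [OnLine, S.hW, mem_bline] at hP
  obtain ⟨s0, t0, hP⟩ := hP
  have hne := ne_of_rep hP
  set φ := algebraMap K (AlgebraicClosure K) with hφ
  obtain ⟨k, hk, hrep⟩ : ∃ k : AlgebraicClosure K, k ≠ 0 ∧
      (clPt φ P).rep = k • vec e' (φ s0) (φ t0) 0 0 := by
    obtain ⟨a, ha⟩ := Projectivization.exists_smul_eq_mk_rep (AlgebraicClosure K)
      (clVec φ P.rep) (clVec_ne_zero φ P.rep_nonzero)
    refine ⟨a, a.ne_zero, ?_⟩
    rw [clPt, ← ha, Units.smul_def, hP, clVec_vec, S.he', map_zero]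
  have hne' : φ s0 ≠ 0 ∨ φ t0 ≠ 0 := by
    simpa using hne
  have hab := S.ab _ _ hne'
  obtain ⟨eA, eD, ew, eQ⟩ := eval_coef_map φ c s0 t0
  rw [← S.hc'] at eA eD ew eQ
  by_cases hw : cw c' (φ s0) (φ t0) = 0
  · left
    exact (parabolic_iff S.ad' S.ind' hk hab hrep).2 hw
  · right
    have hw0 : cw c s0 t0 ≠ 0 := by
      intro h
      rw [ew, h, map_zero] at hw
      exact hw rfl
    obtain ⟨s, t, hst⟩ := exists_st hne (-cQ c s0 t0 / cw c s0 t0)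
    have hst1 : cw c s0 t0 * (t0 * s - s0 * t) + cQ c s0 t0 = 0 := by
      rw [hst]; field_simp; ring
    have hst2 : cw c' (φ s0) (φ t0) * (φ t0 * φ s - φ s0 * φ t) + cQ c' (φ s0) (φ t0) = 0 := by
      rw [ew, eQ, ← map_mul, ← map_mul, ← map_sub, ← map_mul, ← map_add, hst1, map_zero]
    refine ⟨bline e', aline e' c' (φ s0) (φ t0) (φ s) (φ t),
      bline_ne_aline S.ind' _ _ hab, asym_two S.ad' S.ind' hk hab hrep hw hst2,
      ⟨W, S.hW'.symm⟩, ⟨aline e c s0 t0 s t, ?_⟩⟩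
    rw [aline, aline, span_clVec_pair, clVec_vec, clVec_vec, S.he', eA, eD, map_zero, map_neg]

/-- The Wronskian polynomials vanish iff the coefficients do. -/
lemma Setup.wronsk (S : Setup F W e c e' c') :
    (gaussQuad F (e 0) (e 1) (e 2) * pderiv 0 (gaussQuad F (e 0) (e 1) (e 3)) ≠
        gaussQuad F (e 0) (e 1) (e 3) * pderiv 0 (gaussQuad F (e 0) (e 1) (e 2)) ∨
      gaussQuad F (e 0) (e 1) (e 2) * pderiv 1 (gaussQuad F (e 0) (e 1) (e 3)) ≠
        gaussQuad F (e 0) (e 1) (e 3) * pderiv 1 (gaussQuad F (e 0) (e 1) (e 2))) ↔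
    ¬ (c.a0 * c.b1 - c.a1 * c.b0 = 0 ∧ 2 * (c.a0 * c.b2 - c.a2 * c.b0) = 0 ∧
      c.a1 * c.b2 - c.a2 * c.b1 = 0) := by
  obtain ⟨hA, hB⟩ := S.ad.gaussQuad_a
  rw [hA, hB]
  have hn : (0 : Fin 2) ≠ 1 := by decide
  have d0 : ∀ x y z : K, pderiv 0 (C x * X 0 ^ 2 + C y * X 0 * X 1 + C z * X 1 ^ 2 :
      MvPolynomial (Fin 2) K) = 2 * C x * X 0 + C y * X 1 := by
    intro x y z
    simp [pderiv_X, Pi.single_apply, Derivation.leibniz, Derivation.leibniz_pow]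
    ring
  have d1 : ∀ x y z : K, pderiv 1 (C x * X 0 ^ 2 + C y * X 0 * X 1 + C z * X 1 ^ 2 :
      MvPolynomial (Fin 2) K) = C y * X 0 + 2 * C z * X 1 := by
    intro x y z
    simp [pderiv_X, Pi.single_apply, Derivation.leibniz, Derivation.leibniz_pow]
    ring
  rw [d0, d0, d1, d1]
  have h2 : (C (2 : K) : MvPolynomial (Fin 2) K) = 2 := map_ofNat C 2
  constructor
  · rintro h ⟨h1, h3, h4⟩
    have h1' := congrArg (C (σ := Fin 2)) h1
    have h3' := congrArg (C (σ := Fin 2)) h3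
    have h4' := congrArg (C (σ := Fin 2)) h4
    simp only [map_sub, map_mul, map_zero, h2] at h1' h3' h4'
    rcases h with h | h
    · apply h
      linear_combination -X 0 ^ 2 * X 1 * h1' - X 0 * X 1 ^ 2 * h3' - X 1 ^ 3 * h4'
    · apply h
      linear_combination X 0 ^ 3 * h1' + X 0 ^ 2 * X 1 * h3' + X 0 * X 1 ^ 2 * h4'
  · intro h
    by_contra hcon
    push Not at hcon
    apply h
    have := bincubic_zero (p := c.a0 * c.b1 - c.a1 * c.b0)
      (q := 2 * (c.a0 * c.b2 - c.a2 * c.b0)) (r := c.a1 * c.b2 - c.a2 * c.b1) (s := 0) (by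
        simp only [map_sub, map_mul, map_zero, h2]
        linear_combination hcon.2)
    exact ⟨this.1, this.2.1, this.2.2.1⟩

lemma Setup.sep_of (S : Setup F W e c e' c')
    (h : ¬ (c.a0 * c.b1 - c.a1 * c.b0 = 0 ∧ 2 * (c.a0 * c.b2 - c.a2 * c.b0) = 0 ∧
      c.a1 * c.b2 - c.a2 * c.b1 = 0)) : GaussSeparable F W := by
  refine ⟨e 0, e 1, e 2, e 3, ?_, ?_, ?_, S.wronsk.2 h⟩
  · rw [S.hW]; exact Submodule.subset_span (by simp)
  · rw [S.hW]; exact Submodule.subset_span (by simp)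
  · have : ![e 0, e 1, e 2, e 3] = e := by
      funext i; fin_cases i <;> rfl
    rw [this]; exact S.ind

/-- The resultant over `K`. -/
lemma Setup.res (S : Setup F W e c e' c') :
    (c.a0 * c.b2 - c.a2 * c.b0) ^ 2 -
      (c.a0 * c.b1 - c.a1 * c.b0) * (c.a1 * c.b2 - c.a2 * c.b1) ≠ 0 := by
  intro h
  apply res_ne c' S.ab
  have := congrArg (algebraMap K (AlgebraicClosure K)) h
  rw [S.hc']
  simpa [Coef.map] using this

lemma gaussQuad_lin (u v x y : Fin 4 → K) (k m : K) :
    gaussQuad F u v (k • x + m • y) = C k * gaussQuad F u v x + C m * gaussQuad F u v y := by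
  simp only [gaussQuad, Finset.mul_sum, ← Finset.sum_add_distrib]
  apply Finset.sum_congr rfl
  intro i _
  simp
  ring

lemma Setup.final (S : Setup F W e c e' c') (h2 : (2 : K) = 0)
    (ha0 : c.a0 = 1) (ha1 : c.a1 = 0) (ha2 : c.a2 = 0)
    (hb0 : c.b0 = 0) (hb1 : c.b1 = 0) (hb2 : c.b2 = 1) :
    (∀ P, OnLine (clLine W) P → ParabolicAt (clF F) P) ∧
      {P | OnLine (clLine W) P ∧ EckardtAt (clF F) P}.ncard = 5 := by
  have h2' : (2 : AlgebraicClosure K) = 0 := by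
    have := congrArg (algebraMap K (AlgebraicClosure K)) h2
    rwa [map_ofNat, map_zero] at this
  have ka0 : c'.a0 = 1 := by simp [S.hc', Coef.map, ha0]
  have ka1 : c'.a1 = 0 := by simp [S.hc', Coef.map, ha1]
  have ka2 : c'.a2 = 0 := by simp [S.hc', Coef.map, ha2]
  have kb0 : c'.b0 = 0 := by simp [S.hc', Coef.map, hb0]
  have kb1 : c'.b1 = 0 := by simp [S.hc', Coef.map, hb1]
  have kb2 : c'.b2 = 1 := by simp [S.hc', Coef.map, hb2]
  have hw : ∀ s t, cw c' s t = 0 := by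
    intro s t
    simp [cw, ka0, ka1, ka2, kb0, kb1, kb2, h2']
  have hq := fun S' T' h3 h4 => quintic_nosing c' h2' ka0 ka1 ka2 kb0 kb1 kb2 S.ns
    (S := S') (T := T') h3 h4
  constructor
  · intro P hP
    rw [OnLine, S.hW', mem_bline] at hP
    obtain ⟨s, t, h⟩ := hP
    refine (parabolic_iff S.ad' S.ind' one_ne_zero (S.ab s t (ne_of_rep h)) ?_).2 (hw s t)
    rw [one_smul, h]
  · rw [← count_Q S.ind' c' ka0 ka1 ka2 kb0 kb1 kb2 h2' hq]
    congr 1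
    ext P
    simp only [Set.mem_setOf_eq, zpts, OnLine, S.hW', mem_bline]
    constructor
    · rintro ⟨⟨s, t, h⟩, hE⟩
      refine ⟨s, t, h, eckardt_Q S.ad' S.ind' one_ne_zero (S.ab s t (ne_of_rep h)) ?_
        (hw s t) hE⟩
      rw [one_smul, h]
    · rintro ⟨s, t, h, hQ⟩
      exact ⟨⟨s, t, h⟩, eckardt_of_Q S.ad' S.ind' ka0 ka1 ka2 kb0 kb1 kb2 h2' hq
        (ne_of_rep h) h hQ⟩

lemma Setup.insep (S : Setup F W e c e' c') (hF : SmoothCubic F) (hl : IsLine W)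
    (hS : LineOnSurf F W) (h2 : (2 : K) = 0) (hns : ¬ GaussSeparable F W) :
    ∃ e c e' c', Setup F W e c e' c' ∧ c.a0 = 1 ∧ c.a1 = 0 ∧ c.a2 = 0 ∧
      c.b0 = 0 ∧ c.b1 = 0 ∧ c.b2 = 1 := by
  have h : c.a0 * c.b1 - c.a1 * c.b0 = 0 ∧ 2 * (c.a0 * c.b2 - c.a2 * c.b0) = 0 ∧
      c.a1 * c.b2 - c.a2 * c.b1 = 0 := by
    by_contra hcon
    exact hns (S.sep_of hcon)
  obtain ⟨h01, -, h12⟩ := h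
  have hD : c.a0 * c.b2 - c.a2 * c.b0 ≠ 0 := by
    intro hD
    apply S.res
    rw [hD, h01]; ring
  obtain ⟨D, hDe⟩ : ∃ D, D = c.a0 * c.b2 - c.a2 * c.b0 := ⟨_, rfl⟩
  rw [← hDe] at hD
  have hA1 : c.a1 = 0 := by
    have : D * c.a1 = 0 := by rw [hDe]; linear_combination c.a0 * h12 + c.a2 * h01
    simpa [hD] using this
  have hB1 : c.b1 = 0 := by
    have : D * c.b1 = 0 := by rw [hDe]; linear_combination c.b0 * h12 + c.b2 * h01
    simpa [hD] using this
  obtain ⟨f, hf⟩ : ∃ f : Fin 4 → Fin 4 → K, f = ![e 0, e 1, (c.b2 / D) • e 2 + (-c.a2 / D) • e 3,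
    (-c.b0 / D) • e 2 + (c.a0 / D) • e 3] := ⟨_, rfl⟩
  have f0 : f 0 = e 0 := by rw [hf]; rfl
  have f1 : f 1 = e 1 := by rw [hf]; rfl
  have f2 : f 2 = (c.b2 / D) • e 2 + (-c.a2 / D) • e 3 := by rw [hf]; rfl
  have f3 : f 3 = (-c.b0 / D) • e 2 + (c.a0 / D) • e 3 := by rw [hf]; rfl
  have find : LinearIndependent K f := by
    rw [Fintype.linearIndependent_iff]
    intro g hg
    have hv : vec e (g 0) (g 1) (g 2 * (c.b2 / D) + g 3 * (-c.b0 / D))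
        (g 2 * (-c.a2 / D) + g 3 * (c.a0 / D)) = 0 := by
      rw [← hg, Fin.sum_univ_four, f0, f1, f2, f3, vec]
      module
    obtain ⟨g0, g1, g2, g3⟩ := vec_zero S.ind hv
    field_simp at g2 g3
    have k2 : D * g 2 = 0 := by
      rw [hDe]; linear_combination c.a0 * g2 + c.b0 * g3
    have k3 : D * g 3 = 0 := by
      rw [hDe]; linear_combination c.a2 * g2 + c.b2 * g3
    have k2' : g 2 = 0 := by simpa [hD] using k2
    have k3' : g 3 = 0 := by simpa [hD] using k3
    intro i
    fin_cases i
    · exact g0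
    · exact g1
    · exact k2'
    · exact k3'
  have m0 : f 0 ∈ W := by
    rw [f0, S.hW]; exact Submodule.subset_span (by simp)
  have m1 : f 1 ∈ W := by
    rw [f1, S.hW]; exact Submodule.subset_span (by simp)
  obtain ⟨d, f', d', T⟩ := exists_setup hF hl hS find m0 m1
  refine ⟨f, d, f', d', T, ?_⟩
  obtain ⟨hA, hB⟩ := S.ad.gaussQuad_a
  obtain ⟨tA, tB⟩ := T.ad.gaussQuad_a
  rw [f0, f1, f2, gaussQuad_lin, hA, hB, hA1, hB1] at tA
  rw [f0, f1, f3, gaussQuad_lin, hA, hB, hA1, hB1] at tB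
  have e1 : c.b2 / D * c.a0 + -c.a2 / D * c.b0 = 1 := by
    field_simp; rw [hDe]; ring
  have e2 : c.b2 / D * c.a2 + -c.a2 / D * c.b2 = 0 := by
    field_simp; ring
  have e3 : -c.b0 / D * c.a0 + c.a0 / D * c.b0 = 0 := by
    field_simp; ring
  have e4 : -c.b0 / D * c.a2 + c.a0 / D * c.b2 = 1 := by
    field_simp; rw [hDe]; ring
  have pA := binquad_zero (q := (c.b2 / D * c.a0 + -c.a2 / D * c.b0) - d.a0) (r := 0 - d.a1)
    (s := (c.b2 / D * c.a2 + -c.a2 / D * c.b2) - d.a2) (by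
      simp only [map_sub, map_mul, map_add, map_zero] at tA ⊢
      linear_combination tA)
  have pB := binquad_zero (q := (-c.b0 / D * c.a0 + c.a0 / D * c.b0) - d.b0) (r := 0 - d.b1)
    (s := (-c.b0 / D * c.a2 + c.a0 / D * c.b2) - d.b2) (by
      simp only [map_sub, map_mul, map_add, map_zero] at tB ⊢
      linear_combination tB)
  rw [e1, e2] at pA
  rw [e3, e4] at pB
  exact ⟨(sub_eq_zero.1 pA.1).symm, (sub_eq_zero.1 pA.2.1).symm, (sub_eq_zero.1 pA.2.2).symm,
    (sub_eq_zero.1 pB.1).symm, (sub_eq_zero.1 pB.2.1).symm, (sub_eq_zero.1 pB.2.2).symm⟩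

end part4

end CubicSurf


open CubicSurf MvPolynomial in
/-- Let `S` be a smooth cubic surface over `K` and `ℓ ⊆ S` a `K`-line.
Then every `P ∈ ℓ(K)` is parabolic or `K`-hyperbolic.  Moreover:
(i) if `char K ≠ 2` then the Gauss map `γ_ℓ` is separable, exactly two points of `ℓ(K̄)`
are parabolic, and `ℓ` contains at most two Eckardt points;
(ii) if `char K = 2` and `γ_ℓ` is separable then exactly one point of `ℓ(K̄)` is
parabolic and `ℓ` contains at most one Eckardt point;
(iii) if `char K = 2` and `γ_ℓ` is inseparable then every point of `ℓ(K̄)` is parabolic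
and `ℓ` contains exactly 5 Eckardt points. -/
theorem parabolic_points_on_line
    {K : Type*} [Field K]
    (F : MvPolynomial (Fin 4) K) (hF : SmoothCubic F)
    (W : Submodule K (Fin 4 → K)) (hl : IsLine W) (hS : LineOnSurf F W) :
    (∀ P : Projectivization K (Fin 4 → K), OnLine W P →
      IsParabolic F P ∨ IsHyperbolic F P) ∧
    (ringChar K ≠ 2 →
      GaussSeparable F W ∧
      {P | OnLine (clLine W) P ∧ ParabolicAt (clF F) P}.ncard = 2 ∧
      {P | OnLine (clLine W) P ∧ EckardtAt (clF F) P}.Finite ∧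
      {P | OnLine (clLine W) P ∧ EckardtAt (clF F) P}.ncard ≤ 2) ∧
    (ringChar K = 2 → GaussSeparable F W →
      {P | OnLine (clLine W) P ∧ ParabolicAt (clF F) P}.ncard = 1 ∧
      {P | OnLine (clLine W) P ∧ EckardtAt (clF F) P}.Finite ∧
      {P | OnLine (clLine W) P ∧ EckardtAt (clF F) P}.ncard ≤ 1) ∧
    (ringChar K = 2 → ¬ GaussSeparable F W →
      (∀ P, OnLine (clLine W) P → ParabolicAt (clF F) P) ∧
      {P | OnLine (clLine W) P ∧ EckardtAt (clF F) P}.ncard = 5) := by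
  obtain ⟨e, he, h0, h1⟩ := exists_basis hl
  obtain ⟨c, e', c', S⟩ := exists_setup hF hl hS he h0 h1
  refine ⟨fun P hP => S.part1 hP, fun hchar => ?_, fun hchar hsep => ?_, fun hchar hsep => ?_⟩
  · have h2 : (2 : K) ≠ 0 := Ring.two_ne_zero hchar
    have h2' : (2 : AlgebraicClosure K) ≠ 0 := by
      intro h
      apply h2
      apply (algebraMap K (AlgebraicClosure K)).injective
      rw [map_ofNat, map_zero]
      exact h
    refine ⟨S.sep_of ?_, S.eck_bound (count_w S.ind' c' h2' (res_ne c' S.ab)) two_ne_zero⟩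
    rintro ⟨k1, k2, k3⟩
    have k2' : c.a0 * c.b2 - c.a2 * c.b0 = 0 := by simpa [h2] using k2
    apply S.res
    rw [k1, k2']
    ring
  · have h2 : (2 : K) = 0 := by
      have := ringChar.Nat.cast_ringChar (R := K)
      rw [hchar] at this
      exact_mod_cast this
    have h2' : (2 : AlgebraicClosure K) = 0 := by
      have := congrArg (algebraMap K (AlgebraicClosure K)) h2
      rwa [map_ofNat, map_zero] at this
    obtain ⟨u, v, a, b, hu, hv, hind, hwr⟩ := hsep
    obtain ⟨d, f', d', T⟩ := exists_setup hF hl hS hind hu hv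
    refine T.eck_bound (count_w_one T.ind' d' h2' ?_) one_ne_zero
    have hk := T.wronsk.1 hwr
    by_contra hcon
    push Not at hcon
    apply hk
    obtain ⟨q1, q2⟩ := hcon
    rw [T.hc'] at q1 q2
    refine ⟨?_, by rw [h2, zero_mul], ?_⟩
    · apply (algebraMap K (AlgebraicClosure K)).injective
      simpa [Coef.map] using q1
    · apply (algebraMap K (AlgebraicClosure K)).injective
      simpa [Coef.map] using q2
  · have h2 : (2 : K) = 0 := by
      have := ringChar.Nat.cast_ringChar (R := K)
      rw [hchar] at this
      exact_mod_cast this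
    obtain ⟨f, d, f', d', T, q0, q1, q2, q3, q4, q5⟩ := S.insep hF hl hS h2 hsep
    exact T.final h2 q0 q1 q2 q3 q4 q5
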